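/- arXiv:1609.09480 — 4 statements merged into one kernel-verified Lean document; each statement's English description precedes it below -/
import Mathlib

section
/- Let (X,d) be a good discrete hyperbolic space, δ-hyperbolic for an integer δ ≥ 1, equipped with an isometric action of a group G. Then there exists a map assigning to each pair (x,a) ∈ X × X a finitely supported probability measure μ_x(a) on X, which is G-equivariant (μ_{g·x}(g·a)(g·y) = μ_x(a)(y) for all g ∈ G and x,a,y ∈ X) and such that: (i) supp μ_x(a) ⊆ B(a,4δ) ∩ 2δ-geod(x,a), and even supp μ_x(a) ⊆ S(a,4δ) ∩ 2δ-geod(x,a) whenever d(x,a) ≥ 4δ; (ii) there exist reals ε > 0 and C > 0 such that for all x, x', a ∈ X with d(x,x') = 1, ‖μ_x(a) − μ_{x'}(a)‖₁ ≤ C·exp(−ε·d(x,a)); (iii) there exist a real η > 0 and N ∈ ℕ such that for all x, x' ∈ X with d(x,x') ≥ N, the set of points a ∈ X for which supp μ_x(a) and supp μ_{x'}(a) are disjoint is finite of cardinality at least η·d(x,x'). -/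
/-!
To build `μ_x(a)`, descend at random from `x` towards `a` through the spheres of radii
`…, 10δ, 7δ, 4δ` around `a`, moving each time from the current point `y` to a uniformly chosen
point of the next sphere which is on a geodesic from `y` to `a` up to an error `δ`. By
hyperbolicity the descent never leaves `2δ-geod(x, a)`, and all the points `y` of one sphere
which lie in `5δ-geod(x, a)` have a possible next point in common. The number of choices being
bounded by some `V`, each step therefore contracts the signed measures of mass zero by a factor
`1 - 1 / V`. If `x` and `x'` are neighbours, then both descents take place in `5δ-geod(x, a)`,
whence the exponential decay in `d(x, a)`.

A point `a` on a geodesic from `x` to `x'`, far from its ends, separates `x` from `x'`: a common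
point of the two supports would be at distance at most `d(x, a) - 2δ` from `x` and
`d(x', a) - 2δ` from `x'`. On the other hand, summing the decay estimate along a path from `x` to
`x'` shows that `‖μ_x(a) - μ_{x'}(a)‖₁ < 2` as soon as `a` is far from `x`, and then the supports
meet.
-/

namespace DiscreteHyperbolic

open Finsupp Metric

section FiniteMeasures

variable {X Y : Type*}

/-- The total mass of a finitely supported signed measure. -/
noncomputable def mass : (X →₀ ℝ) →ₗ[ℝ] ℝ := linearCombination ℝ fun _ => 1

/-- The `ℓ¹` norm on finitely supported signed measures, as a seminorm so that the general API
applies. -/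
noncomputable def l1Norm : Seminorm ℝ (X →₀ ℝ) :=
  .of (fun σ => σ.sum fun _ c => |c|)
    (fun σ τ => by
      classical
      rw [sum_of_support_subset σ Finset.subset_union_left _ (fun _ _ => abs_zero),
        sum_of_support_subset τ Finset.subset_union_right _ (fun _ _ => abs_zero),
        sum_of_support_subset _ support_add _ (fun _ _ => abs_zero), ← Finset.sum_add_distrib]
      exact Finset.sum_le_sum fun y _ => abs_add_le _ _)
    (fun c σ => by
      rw [sum_smul_index fun _ => abs_zero, Finsupp.mul_sum]
      simp only [abs_mul, Real.norm_eq_abs])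

/-- Finitely supported probability measures carried by `S`. Unlike `Convexity.StdSimplex` this is a
predicate, because probability measures get subtracted from each other all the time here. -/
structure IsProbOn (S : Set X) (ν : X →₀ ℝ) : Prop where
  nonneg : 0 ≤ ν
  mass_eq_one : mass ν = 1
  mem_supported : ν ∈ supported ℝ ℝ S

/-- The uniform probability measure on a finite nonempty set; it is `0` if the set is infinite,
because then `Set.ncard` is `0`. -/
noncomputable def uniform (S : Set X) : X →₀ ℝ :=
  ofSupportFinite (S.indicator fun _ => (S.ncard : ℝ)⁻¹) <| by
    rcases S.finite_or_infinite with hS | hS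
    · exact hS.subset Set.support_indicator_subset
    · simp [hS.ncard]

lemma mass_apply (σ : X →₀ ℝ) : mass σ = σ.sum fun _ c => c := by
  simp [mass, linearCombination_apply]

@[simp]
lemma mass_single (z : X) (c : ℝ) : mass (single z c) = c := by
  simp [mass]

lemma mass_eq_finsum (σ : X →₀ ℝ) : mass σ = ∑ᶠ y, σ y := by
  rw [mass_apply, Finsupp.sum,
    finsum_eq_sum_of_support_subset _ (s := σ.support) (by rw [fun_support_eq])]

lemma l1Norm_apply (σ : X →₀ ℝ) : l1Norm σ = σ.sum fun _ c => |c| :=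
  rfl

lemma l1Norm_eq_finsum (σ : X →₀ ℝ) : l1Norm σ = ∑ᶠ y, |σ y| := by
  refine (finsum_eq_sum_of_support_subset _ fun y hy => ?_).symm
  simpa using hy

lemma l1Norm_eq_mass {σ : X →₀ ℝ} (hσ : 0 ≤ σ) : l1Norm σ = mass σ := by
  rw [l1Norm_apply, mass_apply]
  exact Finset.sum_congr rfl fun y _ => abs_of_nonneg (hσ y)

lemma mass_linearCombination {f : X → Y →₀ ℝ} {σ : X →₀ ℝ}
    (hf : ∀ y ∈ σ.support, mass (f y) = 1) : mass (linearCombination ℝ f σ) = mass σ := by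
  rw [apply_linearCombination, linearCombination_apply, mass_apply]
  refine Finset.sum_congr rfl fun y hy => ?_
  simp [hf y hy]

lemma linearCombination_mem_supported {f : X → Y →₀ ℝ} {S : Set X} {T : Set Y} {σ : X →₀ ℝ}
    (hσ : σ ∈ supported ℝ ℝ S) (hf : ∀ y ∈ S, f y ∈ supported ℝ ℝ T) :
    linearCombination ℝ f σ ∈ supported ℝ ℝ T :=
  Submodule.sum_mem _ fun y hy => Submodule.smul_mem _ _ (hf y (hσ hy))

lemma l1Norm_linearCombination_le {f : X → Y →₀ ℝ} {σ : X →₀ ℝ} {q : ℝ}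
    (hf : ∀ y ∈ σ.support, l1Norm (f y) ≤ q) :
    l1Norm (linearCombination ℝ f σ) ≤ q * l1Norm σ := by
  rw [linearCombination_apply, l1Norm_apply σ, Finsupp.mul_sum]
  refine (Finset.le_sum_of_subadditive l1Norm (map_zero _).le (map_add_le_add _) _ _).trans ?_
  refine Finset.sum_le_sum fun y hy => ?_
  rw [map_smul_eq_mul, mul_comm, Real.norm_eq_abs]
  exact mul_le_mul_of_nonneg_right (hf y hy) (abs_nonneg _)

lemma linearCombination_mapDomain_eq {f : X → X →₀ ℝ} {f' : Y → Y →₀ ℝ} {e : X → Y}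
    (h : ∀ y, f' (e y) = mapDomain e (f y)) (σ : X →₀ ℝ) :
    linearCombination ℝ f' (mapDomain e σ) = mapDomain e (linearCombination ℝ f σ) := by
  rw [linearCombination_mapDomain, ← lmapDomain_apply ℝ ℝ, apply_linearCombination]
  exact congrArg (linearCombination ℝ · σ) (funext h)

lemma uniform_apply (S : Set X) (y : X) :
    uniform S y = S.indicator (fun _ => (S.ncard : ℝ)⁻¹) y :=
  rfl

lemma mapDomain_uniform {e : X → Y} (he : e.Injective) (S : Set X) :
    mapDomain e (uniform S) = uniform (e '' S) := by
  ext z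
  by_cases hz : z ∈ Set.range e
  · obtain ⟨y, rfl⟩ := hz
    rw [mapDomain_apply he, uniform_apply, uniform_apply, Set.ncard_image_of_injective S he,
      Set.indicator_image he]
    rfl
  · rw [mapDomain_of_notMem_range _ _ hz, uniform_apply,
      Set.indicator_of_notMem fun h => hz (Set.image_subset_range e S h)]

namespace IsProbOn

variable {S T : Set X} {ν ν' : X →₀ ℝ}

protected lemma mono (hν : IsProbOn S ν) (hST : S ⊆ T) : IsProbOn T ν :=
  ⟨hν.nonneg, hν.mass_eq_one, supported_mono hST hν.mem_supported⟩

lemma mem_of_ne_zero (hν : IsProbOn S ν) {y : X} (hy : ν y ≠ 0) : y ∈ S :=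
  hν.mem_supported (mem_support_iff.2 hy)

protected lemma single {x : X} (hx : x ∈ S) : IsProbOn S (single x 1) :=
  ⟨single_nonneg.2 zero_le_one, mass_single x 1, single_mem_supported ℝ 1 hx⟩

protected lemma uniform (hS : S.Finite) (hne : S.Nonempty) : IsProbOn S (uniform S) where
  nonneg y := by
    rw [uniform_apply]
    exact Set.indicator_nonneg (fun _ _ => by positivity) y
  mass_eq_one := by
    have hcard : (S.ncard : ℝ) ≠ 0 := by exact_mod_cast (Set.ncard_pos hS).2 hne |>.ne'
    simp only [mass_eq_finsum, uniform_apply]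
    rw [← finsum_mem_def, finsum_mem_eq_finite_toFinset_sum _ hS, Finset.sum_const,
      ← Set.ncard_eq_toFinset_card S hS, nsmul_eq_mul, mul_inv_cancel₀ hcard]
  mem_supported _ hy := Set.mem_of_indicator_ne_zero <| by
    rwa [← uniform_apply, ← mem_support_iff, ← Finset.mem_coe]

protected lemma linearCombination {T : Set Y} {f : X → Y →₀ ℝ} (hν : IsProbOn S ν)
    (hf : ∀ y ∈ S, IsProbOn T (f y)) : IsProbOn T (linearCombination ℝ f ν) where
  nonneg := Finset.sum_nonneg fun y hy =>
    smul_nonneg (hν.nonneg y) (hf y (hν.mem_supported hy)).nonneg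
  mass_eq_one := by
    rw [mass_linearCombination fun y hy => (hf y (hν.mem_supported hy)).mass_eq_one,
      hν.mass_eq_one]
  mem_supported :=
    linearCombination_mem_supported hν.mem_supported fun y hy => (hf y hy).mem_supported

lemma l1Norm_eq_one (hν : IsProbOn S ν) : l1Norm ν = 1 := by
  rw [l1Norm_eq_mass hν.nonneg, hν.mass_eq_one]

lemma l1Norm_sub_le_two (hν : IsProbOn S ν) (hν' : IsProbOn T ν') : l1Norm (ν - ν') ≤ 2 :=
  (map_sub_le_add _ _ _).trans_eq <| by
    rw [hν.l1Norm_eq_one, hν'.l1Norm_eq_one, one_add_one_eq_two]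

lemma l1Norm_sub_eq_two (hν : IsProbOn S ν) (hν' : IsProbOn T ν')
    (h : ∀ y, ν y = 0 ∨ ν' y = 0) : l1Norm (ν - ν') = 2 := by
  have habs : l1Norm (ν - ν') = l1Norm (ν + ν') := by
    simp only [l1Norm_eq_finsum]
    refine finsum_congr fun y => ?_
    rcases h y with h | h <;> simp [h]
  rw [habs, l1Norm_eq_mass (add_nonneg hν.nonneg hν'.nonneg), map_add, hν.mass_eq_one,
    hν'.mass_eq_one, one_add_one_eq_two]

end IsProbOn

/-- Since `σ` has mass zero, replacing `f y` by the positive measure `f y - c • δ_{z₀}`, of mass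
`1 - c`, does not change the linear combination. -/
lemma l1Norm_linearCombination_le_of_le_apply {S : Set X} {T : Set Y} {f : X → Y →₀ ℝ}
    {σ : X →₀ ℝ} {c : ℝ} {z₀ : Y} (hσ : σ ∈ supported ℝ ℝ S) (hmass : mass σ = 0)
    (hf : ∀ y ∈ S, IsProbOn T (f y)) (hc : ∀ y ∈ S, c ≤ f y z₀) :
    l1Norm (linearCombination ℝ f σ) ≤ (1 - c) * l1Norm σ := by
  classical
  have hconst : linearCombination ℝ (fun _ => single z₀ c) σ = 0 := by
    have hsum : ∑ y ∈ σ.support, σ y = 0 := (mass_apply σ).symm.trans hmass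
    rw [linearCombination_apply, Finsupp.sum, ← Finset.sum_smul, hsum, zero_smul]
  have hsub : linearCombination ℝ f σ = linearCombination ℝ (fun y => f y - single z₀ c) σ := by
    rw [← sub_zero (linearCombination ℝ f σ), ← hconst]
    simp only [linearCombination_apply, smul_sub, sum_sub]
  rw [hsub]
  refine l1Norm_linearCombination_le fun y hy => ?_
  have hle : single z₀ c ≤ f y := fun z => by
    rw [single_apply]
    split_ifs with h
    · exact h ▸ hc y (hσ hy)
    · exact (hf y (hσ hy)).nonneg z
  rw [l1Norm_eq_mass (sub_nonneg.2 hle), map_sub, (hf y (hσ hy)).mass_eq_one, mass_single]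

end FiniteMeasures

section Hyperbolicity

variable (X : Type*) [PseudoMetricSpace X]

/-- The four-point condition defining Gromov hyperbolicity with constant `δ`. -/
def IsGromovHyperbolic (δ : ℝ) : Prop :=
  ∀ x₁ x₂ x₃ x₄ : X, dist x₁ x₄ + dist x₂ x₃ ≤
    max (dist x₁ x₂ + dist x₃ x₄) (dist x₁ x₃ + dist x₂ x₄) + δ

/-- Geodesicity in the discrete sense: any two points are joined by a path which is isometric at
integer times. Distances themselves are not assumed to be integers. -/
def IsDiscreteGeodesic : Prop :=
  ∀ x y : X, ∀ k : ℕ, (k : ℝ) ≤ dist x y → ∃ z : X, dist x z = k ∧ dist z y = dist x y - k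

/-- Uniform local finiteness: the number of points of a closed ball is bounded in terms of its
radius. -/
def IsUniformlyLocallyFinite : Prop :=
  ∀ r : ℝ, ∃ K : ℕ, ∀ x : X, (closedBall x r).Finite ∧ Nat.card (closedBall x r) ≤ K

/-- The good discrete hyperbolic spaces of Alvarez and Lafforgue, except that distances need not be
integers and may vanish between distinct points. -/
structure IsGoodHyperbolic (δ : ℕ) : Prop where
  one_le : 1 ≤ δ
  discreteGeodesic : IsDiscreteGeodesic X
  uniformlyLocallyFinite : IsUniformlyLocallyFinite X
  gromovHyperbolic : IsGromovHyperbolic X δ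

variable {X}

/-- The set `ε-geod(x, y)` of points which are on a geodesic from `x` to `y` up to an error `ε`. -/
def almostGeod (ε : ℝ) (x y : X) : Set X := {z | dist x z + dist z y ≤ dist x y + ε}

/-- The slice `S(a, l) ∩ ε-geod(x, a)`. -/
def slice (ε : ℝ) (x a : X) (l : ℝ) : Set X := sphere a l ∩ almostGeod ε x a

lemma IsUniformlyLocallyFinite.finite_closedBall (h : IsUniformlyLocallyFinite X) (x : X)
    (r : ℝ) : (closedBall x r).Finite :=
  ((h r).choose_spec x).1

lemma IsUniformlyLocallyFinite.finite_slice (h : IsUniformlyLocallyFinite X) (ε : ℝ) (x a : X)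
    (l : ℝ) : (slice ε x a l).Finite :=
  (h.finite_closedBall a l).subset (Set.inter_subset_left.trans sphere_subset_closedBall)

lemma mem_slice {ε l : ℝ} {x a y : X} :
    y ∈ slice ε x a l ↔ dist y a = l ∧ dist x y + dist y a ≤ dist x a + ε :=
  Iff.rfl

lemma slice_mono {ε ε' : ℝ} (h : ε ≤ ε') (x a : X) (l : ℝ) : slice ε x a l ⊆ slice ε' x a l := by
  intro y hy
  rw [mem_slice] at hy ⊢
  exact ⟨hy.1, by linarith⟩

lemma slice_subset_slice_add (ε : ℝ) (x x' a : X) (l : ℝ) :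
    slice ε x' a l ⊆ slice (ε + 2 * dist x x') x a l := by
  intro y hy
  rw [mem_slice] at hy ⊢
  exact ⟨hy.1, by linarith [dist_triangle x x' y, dist_triangle_left x' a x]⟩

lemma slice_subset_closedBall (ε : ℝ) (x a : X) (l : ℝ) :
    slice ε x a l ⊆ closedBall x (dist x a - l + ε) := by
  intro y hy
  rw [mem_slice] at hy
  rw [mem_closedBall']
  linarith

lemma disjoint_slice {ε l : ℝ} {x x' z : X} (hz : dist x z + dist z x' = dist x x') (hl : ε < l) :
    Disjoint (slice ε x z l) (slice ε x' z l) := by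
  refine Set.disjoint_left.2 fun y hy hy' => ?_
  rw [mem_slice] at hy hy'
  linarith [dist_triangle_right x x' y, dist_comm z x']

lemma image_slice {Y : Type*} [PseudoMetricSpace Y] (e : X ≃ᵢ Y) (ε : ℝ) (x a : X) (l : ℝ) :
    e '' slice ε x a l = slice ε (e x) (e a) l := by
  ext z
  obtain ⟨y, rfl⟩ := e.surjective z
  rw [e.injective.mem_set_image, mem_slice, mem_slice, e.dist_eq, e.dist_eq, e.dist_eq]

namespace IsDiscreteGeodesic

lemma nonempty_slice (hgeo : IsDiscreteGeodesic X) {ε : ℝ} (hε : 0 ≤ ε) {x a : X} {l : ℕ}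
    (hl : (l : ℝ) ≤ dist x a) : (slice ε x a l).Nonempty := by
  obtain ⟨z, haz, hzx⟩ := hgeo a x l (by rwa [dist_comm])
  refine ⟨z, mem_slice.2 ⟨by rwa [dist_comm], ?_⟩⟩
  linarith [dist_comm x z, dist_comm z a, dist_comm a x]

lemma dist_sub_two_mul_le_ncard (hgeo : IsDiscreteGeodesic X) {x x' : X} {r : ℕ}
    {S : Set X} (hS : S.Finite)
    (h : ∀ z, dist x z + dist z x' = dist x x' → r ≤ dist x z → r ≤ dist z x' → z ∈ S) :
    dist x x' - 2 * r ≤ S.ncard := by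
  set D := ⌊dist x x'⌋₊
  have hsub : (Nat.cast : ℕ → ℝ) '' Finset.Icc r (D - r) ⊆ dist x '' S := by
    rintro _ ⟨k, hk, rfl⟩
    obtain ⟨hrk, hkD⟩ := Finset.mem_Icc.1 hk
    have hkr : (k : ℝ) + r ≤ dist x x' :=
      calc (k : ℝ) + r ≤ D := by exact_mod_cast (by omega : k + r ≤ D)
        _ ≤ dist x x' := Nat.floor_le dist_nonneg
    obtain ⟨z, hxz, hzx'⟩ := hgeo x x' k (by linarith)
    exact ⟨z, h z (by linarith) (by rw [hxz]; exact_mod_cast hrk) (by linarith), hxz⟩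
  have hcard : D + 1 ≤ S.ncard + 2 * r := by
    have := (Set.ncard_le_ncard hsub (hS.image _)).trans (Set.ncard_image_le hS)
    rw [Set.ncard_image_of_injective _ Nat.cast_injective, Set.ncard_coe_finset,
      Nat.card_Icc] at this
    omega
  have : (D : ℝ) + 1 ≤ S.ncard + 2 * r := by exact_mod_cast hcard
  linarith [Nat.lt_floor_add_one (dist x x')]

lemma seminorm_sub_le_mul (hgeo : IsDiscreteGeodesic X) {E : Type*} [AddCommGroup E] [Module ℝ E]
    (p : Seminorm ℝ E) {m : X → E} {B : ℝ} {x x' : X} {n : ℕ}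
    (h : ∀ y y', dist x y ≤ n → dist y y' ≤ 1 → p (m y - m y') ≤ B) (hx : dist x x' ≤ n + 1) :
    p (m x - m x') ≤ (n + 1) * B := by
  induction n generalizing x' with
  | zero => simpa using h x x' (by simp) (by simpa using hx)
  | succ n ih =>
    push_cast at h hx ⊢
    have hstep : ∀ {z}, dist x z ≤ n + 1 → p (m x - m z) ≤ (n + 1) * B :=
      ih fun y y' hy => h y y' (by linarith)
    by_cases hn : dist x x' ≤ n + 1
    · have hB : 0 ≤ B := (apply_nonneg p _).trans (h x x (by rw [dist_self]; positivity) (by simp))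
      linarith [hstep hn]
    · obtain ⟨z, hxz, hzx'⟩ := hgeo x x' (n + 1) (by push_cast; linarith)
      push_cast at hxz hzx'
      linarith [hstep hxz.le, h z x' hxz.le (by linarith),
        le_map_sub_add_map_sub p (m x) (m z) (m x')]

end IsDiscreteGeodesic

namespace IsGromovHyperbolic

variable {δ : ℝ}

lemma dist_le_of_mem_slice (hhyp : IsGromovHyperbolic X δ) {ε l : ℝ} {x a y y' : X}
    (hy : y ∈ slice ε x a l) (hy' : y' ∈ slice ε x a l) : dist y y' ≤ ε + δ := by
  rw [mem_slice] at hy hy'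
  have hfour := hhyp y a x y'
  rw [dist_comm y x, dist_comm a x, dist_comm a y'] at hfour
  rcases max_cases (dist y a + dist x y') (dist x y + dist y' a) with ⟨h, -⟩ | ⟨h, -⟩ <;>
    linarith

lemma slice_subset_slice (hhyp : IsGromovHyperbolic X δ) {ε l m : ℝ} {x a y : X}
    (hε : 2 * δ ≤ ε) (hlm : l + δ ≤ m) (hy : y ∈ slice ε x a m) :
    slice δ y a l ⊆ slice ε x a l := by
  intro z hz
  rw [mem_slice] at hy hz ⊢
  refine ⟨hz.1, ?_⟩
  have hδ : 0 ≤ δ := by simpa using hhyp y y y y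
  have hfour := hhyp x y a z
  rw [dist_comm a z] at hfour
  rcases max_cases (dist x y + dist z a) (dist x a + dist y z) with ⟨h, -⟩ | ⟨h, -⟩ <;>
    linarith

lemma exists_forall_mem_slice (hhyp : IsGromovHyperbolic X δ) (hgeo : IsDiscreteGeodesic X)
    {ε m : ℝ} {l : ℕ} {x a : X} (hl : l ≤ m) (hε : ε + δ ≤ 2 * (m - l))
    (hne : (slice ε x a m).Nonempty) :
    ∃ z, ∀ y ∈ slice ε x a m, z ∈ slice δ y a l := by
  obtain ⟨y₀, hy₀⟩ := hne
  obtain ⟨z, haz, hzy₀⟩ := hgeo a y₀ l (by rwa [dist_comm, hy₀.1])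
  refine ⟨z, fun y hy => ?_⟩
  have hyy₀ := hhyp.dist_le_of_mem_slice hy hy₀
  rw [dist_comm] at haz
  rw [mem_slice] at hy hy₀ ⊢
  refine ⟨haz, ?_⟩
  have hfour := hhyp y y₀ a z
  rw [dist_comm a z, dist_comm y₀ z] at hfour
  rw [dist_comm a y₀] at hzy₀
  rcases max_cases (dist y y₀ + dist z a) (dist y a + dist z y₀) with ⟨h, -⟩ | ⟨h, -⟩ <;>
    linarith

end IsGromovHyperbolic

end Hyperbolicity

section Descent

variable {X : Type*} [PseudoMetricSpace X] {δ : ℕ}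

/-- The radii of the spheres around the target visited by the random descent, which stops at the
radius `radius δ 1 = 4δ`. The spacing `3δ` is what makes the transitions from the points of a slice
overlap, see `IsGromovHyperbolic.exists_forall_mem_slice`. -/
def radius (δ n : ℕ) : ℕ := δ * (3 * n + 1)

/-- One step of the random descent towards `a`: the transition from `y` is uniform on the slice
`S(a, l) ∩ δ-geod(y, a)`. -/
noncomputable def step (δ : ℕ) (a : X) (l : ℕ) : (X →₀ ℝ) →ₗ[ℝ] (X →₀ ℝ) :=
  linearCombination ℝ fun y => uniform (slice δ y a l)

/-- The random descent towards `a` through the spheres of radii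
`radius δ n, radius δ (n - 1), …, radius δ 1`. -/
noncomputable def descent (δ : ℕ) (a : X) : ℕ → (X →₀ ℝ) →ₗ[ℝ] (X →₀ ℝ)
  | 0 => .id
  | n + 1 => descent δ a n ∘ₗ step δ a (radius δ (n + 1))

/-- For `1 ≤ δ`, the largest `n` such that `radius δ n ≤ dist x a`, or `0` if `dist x a < 4δ`. -/
noncomputable def stepCount (δ : ℕ) (x a : X) : ℕ := ⌊(dist x a - δ) / (3 * δ)⌋₊

/-- The measure `μ_x(a)` of the theorem: the distribution of the end point of the random descent
from `x` towards `a`. -/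
noncomputable def endMeasure (δ : ℕ) (x a : X) : X →₀ ℝ :=
  descent δ a (stepCount δ x a) (single x 1)

lemma cast_radius_one (δ : ℕ) : (radius δ 1 : ℝ) = 4 * δ := by
  simp only [radius]
  push_cast
  ring

lemma cast_radius_succ (δ n : ℕ) : (radius δ (n + 1) : ℝ) = radius δ n + 3 * δ := by
  simp only [radius]
  push_cast
  ring

lemma le_stepCount_iff (hδ : 1 ≤ δ) {n : ℕ} (hn : n ≠ 0) {x a : X} :
    n ≤ stepCount δ x a ↔ radius δ n ≤ dist x a := by
  have hδ' : (0 : ℝ) < 3 * δ := by positivity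
  rw [stepCount, Nat.le_floor_iff' hn, le_div_iff₀ hδ', le_sub_iff_add_le, radius]
  push_cast
  ring_nf

section Equivariance

variable {Y : Type*} [PseudoMetricSpace Y] (e : X ≃ᵢ Y)

lemma step_mapDomain (δ : ℕ) (a : X) (l : ℕ) (σ : X →₀ ℝ) :
    step δ (e a) l (mapDomain e σ) = mapDomain e (step δ a l σ) :=
  linearCombination_mapDomain_eq
    (fun y => by rw [mapDomain_uniform e.injective, image_slice]) σ

lemma descent_mapDomain (δ : ℕ) (a : X) (n : ℕ) (σ : X →₀ ℝ) :
    descent δ (e a) n (mapDomain e σ) = mapDomain e (descent δ a n σ) := by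
  induction n generalizing σ with
  | zero => rfl
  | succ n ih => exact (congrArg _ (step_mapDomain e δ a _ σ)).trans (ih _)

lemma endMeasure_map (δ : ℕ) (x a : X) :
    endMeasure δ (e x) (e a) = mapDomain e (endMeasure δ x a) := by
  rw [endMeasure, endMeasure, ← descent_mapDomain, mapDomain_single, stepCount, stepCount,
    e.dist_eq]

end Equivariance

namespace IsGoodHyperbolic

variable {s : ℝ} {x a : X} {l n : ℕ} {ν σ : X →₀ ℝ}

lemma isProbOn_uniform_slice (h : IsGoodHyperbolic X δ) (hs : 2 * δ ≤ s) {y : X}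
    (hy : y ∈ slice s x a (l + 3 * δ)) :
    IsProbOn (slice s x a l) (uniform (slice δ y a l)) := by
  have hly : (l : ℝ) ≤ dist y a := by
    rw [(mem_slice.1 hy).1]
    exact le_add_of_nonneg_right (by positivity)
  exact (IsProbOn.uniform (h.uniformlyLocallyFinite.finite_slice δ y a l)
    (h.discreteGeodesic.nonempty_slice δ.cast_nonneg hly)).mono
    (h.gromovHyperbolic.slice_subset_slice hs (by linarith) hy)

lemma isProbOn_step (h : IsGoodHyperbolic X δ) (hs : 2 * δ ≤ s)
    (hν : IsProbOn (slice s x a (l + 3 * δ)) ν) :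
    IsProbOn (slice s x a l) (step δ a l ν) :=
  hν.linearCombination fun _ hy => h.isProbOn_uniform_slice hs hy

/-- `ν` is the law of the descent when it reaches the sphere of radius `radius δ (n + 1)`. -/
lemma exists_isProbOn_descent_eq_endMeasure (h : IsGoodHyperbolic X δ)
    (hn : n < stepCount δ x a) :
    ∃ ν, IsProbOn (slice (2 * δ) x a (radius δ (n + 1))) ν ∧
      descent δ a n ν = endMeasure δ x a := by
  obtain ⟨N, hN⟩ := Nat.exists_eq_add_one_of_ne_zero (Nat.ne_zero_of_lt hn)
  rw [hN] at hn
  induction Nat.le_of_lt_succ hn using Nat.decreasingInduction with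
  | self =>
    have hle : (radius δ (N + 1) : ℝ) ≤ dist x a :=
      (le_stepCount_iff h.one_le N.succ_ne_zero).1 hN.ge
    have hstep : step δ a (radius δ (N + 1)) (single x 1) =
        uniform (slice δ x a (radius δ (N + 1))) := by
      simp [step]
    refine ⟨step δ a (radius δ (N + 1)) (single x 1), ?_, by rw [endMeasure, hN]; rfl⟩
    rw [hstep]
    exact (IsProbOn.uniform (h.uniformlyLocallyFinite.finite_slice _ _ _ _)
      (h.discreteGeodesic.nonempty_slice δ.cast_nonneg hle)).mono
      (slice_mono (by linarith) _ _ _)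
  | of_succ n hn' ih =>
    obtain ⟨ν, hν, hend⟩ := ih (by omega)
    rw [cast_radius_succ] at hν
    exact ⟨step δ a (radius δ (n + 1)) ν, h.isProbOn_step le_rfl hν, hend⟩

lemma isProbOn_endMeasure_of_le (h : IsGoodHyperbolic X δ) (hxa : 4 * δ ≤ dist x a) :
    IsProbOn (slice (2 * δ) x a (4 * δ)) (endMeasure δ x a) := by
  have hpos : 0 < stepCount δ x a :=
    (le_stepCount_iff h.one_le one_ne_zero).2 (by rwa [cast_radius_one])
  obtain ⟨ν, hν, hend⟩ := h.exists_isProbOn_descent_eq_endMeasure hpos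
  rw [cast_radius_one] at hν
  exact hend ▸ hν

variable (x a) in
lemma isProbOn_endMeasure (h : IsGoodHyperbolic X δ) :
    IsProbOn (closedBall a (4 * δ) ∩ almostGeod (2 * δ) x a) (endMeasure δ x a) := by
  rcases le_or_gt (4 * δ : ℝ) (dist x a) with hxa | hxa
  · exact (h.isProbOn_endMeasure_of_le hxa).mono
      (Set.inter_subset_inter_left _ sphere_subset_closedBall)
  · have hzero : stepCount δ x a = 0 := by
      by_contra hne
      have hle := (le_stepCount_iff h.one_le one_ne_zero).1 (Nat.one_le_iff_ne_zero.2 hne)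
      rw [cast_radius_one] at hle
      exact hle.not_gt hxa
    rw [endMeasure, hzero]
    refine IsProbOn.single ⟨hxa.le, ?_⟩
    simp [almostGeod]

section Contraction

variable {V : ℕ}

/-- Doeblin's condition: the transitions from the points of a slice all charge a common point, with
mass at least `V⁻¹`. -/
lemma l1Norm_step_le (h : IsGoodHyperbolic X δ)
    (hV : ∀ y : X, Nat.card (closedBall y (4 * δ)) ≤ V) (hs : 2 * δ ≤ s) (hs' : s ≤ 5 * δ)
    (hσ : σ ∈ supported ℝ ℝ (slice s x a (l + 3 * δ))) (hmass : mass σ = 0) :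
    l1Norm (step δ a l σ) ≤ (1 - (V : ℝ)⁻¹) * l1Norm σ := by
  rcases (slice s x a (l + 3 * δ)).eq_empty_or_nonempty with hempty | hne
  · obtain rfl : σ = 0 := by simpa [hempty] using hσ
    simp
  obtain ⟨z₀, hz₀⟩ := h.gromovHyperbolic.exists_forall_mem_slice h.discreteGeodesic
    (by linarith) (by linarith) hne
  refine l1Norm_linearCombination_le_of_le_apply hσ hmass
    (fun y hy => h.isProbOn_uniform_slice hs hy) (z₀ := z₀) fun y hy => ?_
  have hfin := h.uniformlyLocallyFinite.finite_slice δ y a l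
  have hsub : slice δ y a l ⊆ closedBall y (4 * δ) :=
    (slice_subset_closedBall _ _ _ _).trans <| closedBall_subset_closedBall <| by
      linarith [(mem_slice.1 hy).1]
  have hcard : (slice δ y a l).ncard ≤ V :=
    (Set.ncard_le_ncard hsub (h.uniformlyLocallyFinite.finite_closedBall _ _)).trans (hV y)
  have hpos : 0 < (slice δ y a l).ncard := (Set.ncard_pos hfin).2 ⟨z₀, hz₀ y hy⟩
  rw [uniform_apply, Set.indicator_of_mem (hz₀ y hy)]
  gcongr

lemma l1Norm_descent_le (h : IsGoodHyperbolic X δ)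
    (hV : ∀ y : X, Nat.card (closedBall y (4 * δ)) ≤ V) (hs : 2 * δ ≤ s) (hs' : s ≤ 5 * δ)
    (hσ : σ ∈ supported ℝ ℝ (slice s x a (radius δ (n + 1)))) (hmass : mass σ = 0) :
    l1Norm (descent δ a n σ) ≤ (1 - (V : ℝ)⁻¹) ^ n * l1Norm σ := by
  induction n generalizing σ with
  | zero => simp [descent]
  | succ n ih =>
    rw [cast_radius_succ] at hσ
    have hprob := fun y (hy : y ∈ slice s x a (radius δ (n + 1) + 3 * δ)) =>
      h.isProbOn_uniform_slice hs hy
    have hσ' : step δ a (radius δ (n + 1)) σ ∈ supported ℝ ℝ (slice s x a (radius δ (n + 1))) :=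
      linearCombination_mem_supported hσ fun y hy => (hprob y hy).mem_supported
    have hmass' : mass (step δ a (radius δ (n + 1)) σ) = 0 :=
      (mass_linearCombination fun y hy => (hprob y (hσ hy)).mass_eq_one).trans hmass
    have hq : 0 ≤ 1 - (V : ℝ)⁻¹ := sub_nonneg.2 (Nat.cast_inv_le_one V)
    calc l1Norm (descent δ a n (step δ a (radius δ (n + 1)) σ))
        ≤ (1 - (V : ℝ)⁻¹) ^ n * l1Norm (step δ a (radius δ (n + 1)) σ) := ih hσ' hmass'
      _ ≤ (1 - (V : ℝ)⁻¹) ^ n * ((1 - (V : ℝ)⁻¹) * l1Norm σ) := by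
        gcongr
        exact h.l1Norm_step_le hV hs hs' hσ hmass
      _ = (1 - (V : ℝ)⁻¹) ^ (n + 1) * l1Norm σ := by ring

lemma l1Norm_endMeasure_sub_le (h : IsGoodHyperbolic X δ)
    (hV : ∀ y : X, Nat.card (closedBall y (4 * δ)) ≤ V) {x' : X}
    (hxx' : dist x x' ≤ 1) (hn : n < stepCount δ x a) (hn' : n < stepCount δ x' a) :
    l1Norm (endMeasure δ x a - endMeasure δ x' a) ≤ (1 - (V : ℝ)⁻¹) ^ n * 2 := by
  obtain ⟨ν, hν, hend⟩ := h.exists_isProbOn_descent_eq_endMeasure hn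
  obtain ⟨ν', hν', hend'⟩ := h.exists_isProbOn_descent_eq_endMeasure hn'
  replace hν := hν.mono (slice_mono (ε' := 2 * δ + 2) (by linarith) _ _ _)
  replace hν' := hν'.mono <| (slice_subset_slice_add _ x x' a _).trans
    (slice_mono (ε' := 2 * δ + 2) (by linarith) _ _ _)
  have hδ : (1 : ℝ) ≤ δ := by exact_mod_cast h.one_le
  have hq : 0 ≤ 1 - (V : ℝ)⁻¹ := sub_nonneg.2 (Nat.cast_inv_le_one V)
  rw [← hend, ← hend', ← map_sub]
  calc l1Norm (descent δ a n (ν - ν'))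
      ≤ (1 - (V : ℝ)⁻¹) ^ n * l1Norm (ν - ν') :=
        h.l1Norm_descent_le hV (by linarith) (by linarith)
          (Submodule.sub_mem _ hν.mem_supported hν'.mem_supported)
          (by rw [map_sub, hν.mass_eq_one, hν'.mass_eq_one, sub_self])
    _ ≤ (1 - (V : ℝ)⁻¹) ^ n * 2 := by
        gcongr
        exact hν.l1Norm_sub_le_two hν'

lemma exists_l1Norm_endMeasure_sub_le_pow (h : IsGoodHyperbolic X δ)
    (hV : ∀ y : X, Nat.card (closedBall y (4 * δ)) ≤ V) {x' : X} (hxx' : dist x x' ≤ 1) :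
    ∃ n : ℕ, dist x a ≤ 10 * δ + n * (3 * δ) ∧
      l1Norm (endMeasure δ x a - endMeasure δ x' a) ≤ (1 - (V : ℝ)⁻¹) ^ n * 2 := by
  have hδ : (1 : ℝ) ≤ δ := by exact_mod_cast h.one_le
  rcases le_or_gt (dist x a) (10 * δ) with hd | hd
  · refine ⟨0, by simpa using hd, ?_⟩
    simpa using (h.isProbOn_endMeasure x a).l1Norm_sub_le_two (h.isProbOn_endMeasure x' a)
  have htwo : 2 ≤ stepCount δ x a := by
    rw [le_stepCount_iff h.one_le two_ne_zero, cast_radius_succ, cast_radius_one]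
    linarith
  obtain ⟨n, hn⟩ := Nat.exists_eq_add_of_le' htwo
  have hlower : (radius δ (n + 2) : ℝ) ≤ dist x a :=
    (le_stepCount_iff h.one_le (Nat.succ_ne_zero _)).1 hn.ge
  have hupper : dist x a < radius δ (n + 3) :=
    not_le.1 fun hle => by
      have := (le_stepCount_iff h.one_le (Nat.succ_ne_zero _)).2 hle
      omega
  have hlt : n < stepCount δ x a := by omega
  have hlt' : n + 1 ≤ stepCount δ x' a := by
    rw [le_stepCount_iff h.one_le n.succ_ne_zero]
    rw [cast_radius_succ] at hlower
    linarith [dist_triangle x x' a]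
  refine ⟨n, ?_, h.l1Norm_endMeasure_sub_le hV hxx' hlt hlt'⟩
  simp only [radius] at hupper
  push_cast at hupper
  linarith

end Contraction

lemma exists_l1Norm_endMeasure_sub_le_exp (h : IsGoodHyperbolic X δ) :
    ∃ ε : ℝ, 0 < ε ∧ ∃ C : ℝ, 0 < C ∧ ∀ x x' a : X, dist x x' ≤ 1 →
      l1Norm (endMeasure δ x a - endMeasure δ x' a) ≤ C * Real.exp (-ε * dist x a) := by
  obtain ⟨K, hK⟩ := h.uniformlyLocallyFinite (4 * δ)
  have hδ : (0 : ℝ) < δ := by exact_mod_cast h.one_le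
  set V : ℕ := K + 1
  have hV : (0 : ℝ) < V := by positivity
  refine ⟨1 / (3 * δ * V), by positivity, 2 * Real.exp (10 / (3 * V)), by positivity,
    fun x x' a hxx' => ?_⟩
  obtain ⟨n, hn, hle⟩ := h.exists_l1Norm_endMeasure_sub_le_pow (V := V) (a := a)
    (fun y => (hK y).2.trans K.le_succ) hxx'
  have hexp : n * -(V : ℝ)⁻¹ ≤ 10 / (3 * V) + -(1 / (3 * δ * V)) * dist x a := by
    field_simp
    linarith
  calc l1Norm (endMeasure δ x a - endMeasure δ x' a)
      ≤ (1 - (V : ℝ)⁻¹) ^ n * 2 := hle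
    _ ≤ Real.exp (-(V : ℝ)⁻¹) ^ n * 2 := by
      gcongr
      · exact sub_nonneg.2 (Nat.cast_inv_le_one V)
      · exact Real.one_sub_le_exp_neg _
    _ = Real.exp (n * -(V : ℝ)⁻¹) * 2 := by rw [Real.exp_nat_mul]
    _ ≤ Real.exp (10 / (3 * V) + -(1 / (3 * δ * V)) * dist x a) * 2 := by gcongr
    _ = 2 * Real.exp (10 / (3 * V)) * Real.exp (-(1 / (3 * δ * V)) * dist x a) := by
      rw [Real.exp_add]
      ring

end IsGoodHyperbolic

end Descent

section Separation

variable {X : Type*} [PseudoMetricSpace X]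

/-- The set of points `a` which separate `x` from `x'`: the supports of the measures `μ x a` and
`μ x' a` are disjoint. -/
def separatingSet (μ : X → X → X →₀ ℝ) (x x' : X) : Set X :=
  {a | ∀ y, μ x a y = 0 ∨ μ x' a y = 0}

lemma IsDiscreteGeodesic.finite_separatingSet (hgeo : IsDiscreteGeodesic X)
    (hfin : ∀ (x : X) (r : ℝ), (closedBall x r).Finite) {μ : X → X → X →₀ ℝ}
    (hμ : ∀ x a, IsProbOn Set.univ (μ x a)) {ε C : ℝ} (hε : 0 < ε) (hC : 0 ≤ C)
    (hdecay : ∀ x x' a, dist x x' ≤ 1 → l1Norm (μ x a - μ x' a) ≤ C * Real.exp (-ε * dist x a))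
    (x x' : X) : (separatingSet μ x x').Finite := by
  set n := ⌊dist x x'⌋₊
  refine (hfin x (n + (n + 1) * C / (2 * ε))).subset fun a ha => ?_
  have hpath : l1Norm (μ x a - μ x' a) ≤ (n + 1) * (C * Real.exp (-ε * (dist x a - n))) := by
    refine hgeo.seminorm_sub_le_mul l1Norm (m := fun y => μ y a) (fun y y' hy hyy' => ?_)
      (Nat.lt_floor_add_one _).le
    refine (hdecay y y' a hyy').trans ?_
    have hya : dist x a - n ≤ dist y a := by linarith [dist_triangle x y a]
    gcongr C * Real.exp ?_
    exact mul_le_mul_of_nonpos_left hya (by linarith)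
  rw [(hμ x a).l1Norm_sub_eq_two (hμ x' a) ha, neg_mul, Real.exp_neg] at hpath
  have hexp : ε * (dist x a - n) ≤ Real.exp (ε * (dist x a - n)) := by
    linarith [Real.add_one_le_exp (ε * (dist x a - n))]
  have hbound : Real.exp (ε * (dist x a - n)) * 2 ≤ (n + 1) * C := by
    field_simp at hpath
    linarith
  rw [mem_closedBall', ← sub_le_iff_le_add', le_div_iff₀ (by positivity)]
  linarith

namespace IsGoodHyperbolic

variable {δ : ℕ}

lemma mem_separatingSet (h : IsGoodHyperbolic X δ) {x x' z : X}
    (hz : dist x z + dist z x' = dist x x') (hxz : 4 * δ ≤ dist x z) (hzx' : 4 * δ ≤ dist z x') :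
    z ∈ separatingSet (endMeasure δ) x x' := fun y => by
  have hδ : (0 : ℝ) < δ := by exact_mod_cast h.one_le
  have hdisj := disjoint_slice hz (by linarith : (2 * δ : ℝ) < 4 * δ)
  by_contra! hy
  rw [dist_comm] at hzx'
  exact hdisj.notMem_of_mem_left ((h.isProbOn_endMeasure_of_le hxz).mem_of_ne_zero hy.1)
    ((h.isProbOn_endMeasure_of_le hzx').mem_of_ne_zero hy.2)

lemma finite_separatingSet (h : IsGoodHyperbolic X δ) (x x' : X) :
    (separatingSet (endMeasure δ) x x').Finite := by
  obtain ⟨ε, hε, C, hC, hdecay⟩ := h.exists_l1Norm_endMeasure_sub_le_exp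
  exact h.discreteGeodesic.finite_separatingSet h.uniformlyLocallyFinite.finite_closedBall
    (fun x a => (h.isProbOn_endMeasure x a).mono (Set.subset_univ _)) hε hC.le hdecay x x'

lemma half_dist_le_ncard_separatingSet (h : IsGoodHyperbolic X δ) {x x' : X}
    (hxx' : 16 * δ ≤ dist x x') :
    1 / 2 * dist x x' ≤ (separatingSet (endMeasure δ) x x').ncard := by
  have hcard := h.discreteGeodesic.dist_sub_two_mul_le_ncard (r := 4 * δ)
    (h.finite_separatingSet x x') fun z hz hxz hzx' =>
      h.mem_separatingSet hz (by simpa using hxz) (by simpa using hzx')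
  push_cast at hcard
  linarith

end IsGoodHyperbolic

end Separation

end DiscreteHyperbolic

open DiscreteHyperbolic in
theorem exists_equivariant_measures_good_discrete_hyperbolic_general
    {X : Type*} [PseudoMetricSpace X] {G : Type*} [Group G] [MulAction G X] [IsIsometricSMul G X]
    {δ : ℕ} (h : IsGoodHyperbolic X δ) :
    ∃ μ : X → X → X → ℝ,
      (∀ x a y, 0 ≤ μ x a y) ∧
      (∀ x a, (Function.support (μ x a)).Finite) ∧
      (∀ x a, ∑ᶠ y, μ x a y = 1) ∧
      (∀ (g : G) (x a y : X), μ (g • x) (g • a) (g • y) = μ x a y) ∧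
      (∀ x a y, μ x a y ≠ 0 →
        dist a y ≤ 4 * δ ∧ dist x y + dist y a ≤ dist x a + 2 * δ) ∧
      (∀ x a y, 4 * δ ≤ dist x a → μ x a y ≠ 0 → dist a y = 4 * δ) ∧
      (∃ ε : ℝ, 0 < ε ∧ ∃ C : ℝ, 0 < C ∧ ∀ x x' a : X, dist x x' ≤ 1 →
        ∑ᶠ y, |μ x a y - μ x' a y| ≤ C * Real.exp (-ε * dist x a)) ∧
      (∃ η : ℝ, 0 < η ∧ ∃ N : ℕ, ∀ x x' : X, (N : ℝ) ≤ dist x x' →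
        {a : X | ∀ y, μ x a y = 0 ∨ μ x' a y = 0}.Finite ∧
        η * dist x x' ≤ (Nat.card {a : X | ∀ y, μ x a y = 0 ∨ μ x' a y = 0} : ℝ)) := by
  have hprob := h.isProbOn_endMeasure
  refine ⟨fun x a => endMeasure δ x a, fun x a => (hprob x a).nonneg, ?_, ?_, ?_, ?_, ?_, ?_, ?_⟩
  · exact fun x a => (endMeasure δ x a).hasFiniteSupport
  · exact fun x a => by rw [← mass_eq_finsum, (hprob x a).mass_eq_one]
  · intro g x a y
    exact (DFunLike.congr_fun (endMeasure_map (IsometryEquiv.constSMul g) δ x a) (g • y)).trans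
      (Finsupp.mapDomain_apply (MulAction.injective g) _ y)
  · exact fun x a y hy => ((hprob x a).mem_of_ne_zero hy).imp_left Metric.mem_closedBall'.1
  · exact fun x a y hxa hy =>
      Metric.mem_sphere'.1 ((h.isProbOn_endMeasure_of_le hxa).mem_of_ne_zero hy).1
  · simpa only [l1Norm_eq_finsum, Finsupp.sub_apply] using h.exists_l1Norm_endMeasure_sub_le_exp
  · exact ⟨1 / 2, by norm_num, 16 * δ, fun x x' hxx' =>
      ⟨h.finite_separatingSet x x', h.half_dist_le_ncard_separatingSet (by simpa using hxx')⟩⟩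

/-- Theorem 4.1 of Alvarez–Lafforgue. Given a good discrete hyperbolic space `(X, d)`
(`δ`-hyperbolic for an integer `δ ≥ 1`, with `ℕ`-valued geodesic metric, uniformly
locally finite) equipped with an isometric action of a group `G`, there is a
`G`-equivariant family of finitely supported probability measures `μ x a` on `X`
satisfying the support, exponential-decay and disjointness properties (i), (ii), (iii). -/
theorem exists_equivariant_measures_good_discrete_hyperbolic
    {X : Type*} [MetricSpace X] {G : Type*} [Group G] [MulAction G X]
    (δ : ℤ) (hδ : 1 ≤ δ)
    (hnat : ∀ x y : X, ∃ n : ℕ, dist x y = n)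
    (hgeo : ∀ x y : X, ∀ k : ℕ, (k : ℝ) ≤ dist x y →
      ∃ z : X, dist x z = k ∧ dist z y = dist x y - k)
    (hulf : ∀ r : ℝ, ∃ K : ℕ, ∀ x : X,
      (Metric.closedBall x r).Finite ∧ Nat.card (Metric.closedBall x r) ≤ K)
    (hhyp : ∀ x₁ x₂ x₃ x₄ : X, dist x₁ x₄ + dist x₂ x₃ ≤
      max (dist x₁ x₂ + dist x₃ x₄) (dist x₁ x₃ + dist x₂ x₄) + (δ : ℝ))
    (hiso : ∀ (g : G) (x y : X), dist (g • x) (g • y) = dist x y) :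
    ∃ μ : X → X → X → ℝ,
      -- each `μ x a` is a finitely supported probability measure on `X`
      (∀ x a y, 0 ≤ μ x a y) ∧
      (∀ x a, (Function.support (μ x a)).Finite) ∧
      (∀ x a, ∑ᶠ y, μ x a y = 1) ∧
      -- `G`-equivariance
      (∀ (g : G) (x a y : X), μ (g • x) (g • a) (g • y) = μ x a y) ∧
      -- (i) support contained in `B(a, 4δ) ∩ 2δ-geod(x, a)`,
      --     and in `S(a, 4δ) ∩ 2δ-geod(x, a)` when `d(x, a) ≥ 4δ`
      (∀ x a y, μ x a y ≠ 0 →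
        dist a y ≤ 4 * (δ : ℝ) ∧ dist x y + dist y a ≤ dist x a + 2 * (δ : ℝ)) ∧
      (∀ x a y, 4 * (δ : ℝ) ≤ dist x a → μ x a y ≠ 0 → dist a y = 4 * (δ : ℝ)) ∧
      -- (ii) exponential decay of `‖μ x a - μ x' a‖₁` for neighbors `x, x'`
      (∃ ε : ℝ, 0 < ε ∧ ∃ C : ℝ, 0 < C ∧ ∀ x x' a : X, dist x x' = 1 →
        ∑ᶠ y, |μ x a y - μ x' a y| ≤ C * Real.exp (-ε * dist x a)) ∧
      -- (iii) many points `a` with disjoint supports when `d(x,x')` is large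
      (∃ η : ℝ, 0 < η ∧ ∃ N : ℕ, ∀ x x' : X, (N : ℝ) ≤ dist x x' →
        {a : X | ∀ y, μ x a y = 0 ∨ μ x' a y = 0}.Finite ∧
        η * dist x x' ≤ (Nat.card {a : X | ∀ y, μ x a y = 0 ∨ μ x' a y = 0} : ℝ)) := by
  lift δ to ℕ using by omega
  simp only [Int.cast_natCast] at hhyp ⊢
  have hgood : DiscreteHyperbolic.IsGoodHyperbolic X δ := ⟨by omega, hgeo, hulf, hhyp⟩
  have : IsIsometricSMul G X := ⟨fun g => .of_dist_eq (hiso g)⟩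
  obtain ⟨μ, hnonneg, hfin, hmass, hequiv, hsupp, hsupp', ⟨ε, hε, C, hC, hdecay⟩, hsep⟩ :=
    exists_equivariant_measures_good_discrete_hyperbolic_general (G := G) hgood
  exact ⟨μ, hnonneg, hfin, hmass, hequiv, hsupp, hsupp',
    ⟨ε, hε, C, hC, fun x x' a hxx' => hdecay x x' a hxx'.le⟩, hsep⟩
end

section
/- (Yu's theorem.) Let Γ be a group with a finite generating set S, let d be the associated word metric (d(g,h) is the least n ∈ ℕ such that g⁻¹h is a product of n elements of S ∪ S⁻¹), and assume (Γ,d) is δ-hyperbolic for some real δ ≥ 0, i.e., Γ is a hyperbolic group. Then there exist a real p₀ ≥ 1 and m ∈ ℕ such that for every real p ≥ p₀ there exists a map b : Γ → ℓ^p(Γ × Fin m) which is a cocycle for the representation π given by (π(g)f)(x,i) = f(g⁻¹x, i) (i.e., b(gh) = b(g) + π(g)(b(h)) for all g,h ∈ Γ) and which is proper (for every M ≥ 0 the set {g ∈ Γ : ‖b(g)‖_p ≤ M} is finite). In particular Γ admits a proper affine isometric action on ℓ^p of a finite disjoint union of copies of Γ for all sufficiently large p. -/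
/-!
For each vertex `a` of the Cayley graph, let a random walk jump towards `a` between spheres with
equally spaced radii, each time to a uniformly chosen point lying up to `δ` on a geodesic to `a`.
By hyperbolicity two walks with adjacent starting points stay within distance `3δ` of each other
and meet in each step with a probability bounded below, so the distribution of the point at which
the walk from `x` enters the ball around `a` forgets `x` exponentially fast in `d(x, a)`.

Let `u(x)` be the collection of all these hitting distributions. It is not `p`-summable, but once
the exponential forgetting, raised to the power `p`, beats the growth of the group,
`b(g) = u(g) - u(1)` is, and `b` is a cocycle because the construction is equivariant. It is proper
because for every vertex `a` in the interior of a geodesic from `1` to `g`, the walks from `1` and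
from `g` approach `a` from opposite sides and hit disjoint sets, so that `a` contributes a definite
amount to the norm of `b(g)`.
-/

open Finset SimpleGraph
open scoped BigOperators

section Expect

variable {X : Type*} {s t : Finset X} {f : X → ℝ} {M : ℝ}

lemma expect_sub_expect (hs : s.Nonempty) (ht : t.Nonempty) :
    𝔼 x ∈ s, f x - 𝔼 y ∈ t, f y = 𝔼 q ∈ s ×ˢ t, (f q.1 - f q.2) := by
  simp only [expect_product, expect_sub_distrib, expect_const hs, expect_const ht]

lemma abs_expect_sub_expect_le (hs : s.Nonempty) (ht : t.Nonempty)
    (h : ∀ x ∈ s, ∀ y ∈ t, |f x - f y| ≤ M) :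
    |𝔼 x ∈ s, f x - 𝔼 y ∈ t, f y| ≤ M := by
  rw [expect_sub_expect hs ht]
  refine (abs_expect_le _ _).trans (expect_le (hs.product ht) fun q hq => ?_)
  exact h _ (mem_product.1 hq).1 _ (mem_product.1 hq).2

lemma abs_expect_sub_expect_le_of_mem {z : X} (hs : z ∈ s) (ht : z ∈ t)
    (h : ∀ x ∈ s, ∀ y ∈ t, |f x - f y| ≤ M) :
    |𝔼 x ∈ s, f x - 𝔼 y ∈ t, f y| ≤ (1 - 1 / (#s * #t)) * M := by
  classical
  have hz : (z, z) ∈ s ×ˢ t := mem_product.2 ⟨hs, ht⟩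
  have hcard : (0 : ℝ) < #(s ×ˢ t) := by exact_mod_cast card_pos.2 ⟨_, hz⟩
  have hcard_erase : (#((s ×ˢ t).erase (z, z)) : ℝ) = #(s ×ˢ t) - 1 := by
    rw [card_erase_of_mem hz, Nat.cast_pred (card_pos.2 ⟨_, hz⟩)]
  calc |𝔼 x ∈ s, f x - 𝔼 y ∈ t, f y|
      ≤ 𝔼 q ∈ s ×ˢ t, |f q.1 - f q.2| := by
        rw [expect_sub_expect ⟨z, hs⟩ ⟨z, ht⟩]
        exact abs_expect_le _ _
    -- the pair `(z, z)` contributes nothing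
    _ = (∑ q ∈ (s ×ˢ t).erase (z, z), |f q.1 - f q.2|) / #(s ×ˢ t) := by
        rw [expect_eq_sum_div_card, ← add_sum_erase _ _ hz, sub_self, abs_zero, zero_add]
    _ ≤ #((s ×ˢ t).erase (z, z)) • M / #(s ×ˢ t) := by
        gcongr
        refine sum_le_card_nsmul _ _ _ fun q hq => ?_
        have hq := mem_product.1 (mem_of_mem_erase hq)
        exact h _ hq.1 _ hq.2
    _ = (1 - 1 / (#s * #t)) * M := by
        rw [nsmul_eq_mul, hcard_erase, ← Nat.cast_mul, ← card_product]
        field_simp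

end Expect

section GraphDistance

variable {X Y : Type*} {G : SimpleGraph X} {H : SimpleGraph Y} {x y : X} {n : ℕ}

lemma edist_map_le (φ : G →g H) (x y : X) : H.edist (φ x) (φ y) ≤ G.edist x y :=
  le_iInf fun w => (edist_le (w.map φ)).trans_eq (by rw [Walk.length_map])

lemma dist_map_iso (φ : G ≃g H) (x y : X) : H.dist (φ x) (φ y) = G.dist x y := by
  have h := edist_map_le φ.symm.toHom (φ x) (φ y)
  simp only [RelIso.coe_toRelEmbedding, Embedding.coe_toHom, φ.symm_apply_apply] at h
  exact congrArg ENat.toNat ((edist_map_le φ.toHom x y).antisymm h)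

lemma exists_dist_eq_and_add_dist_eq (hG : G.Connected) (h : n ≤ G.dist x y) :
    ∃ z, G.dist x z = n ∧ n + G.dist z y = G.dist x y := by
  obtain ⟨w, hw⟩ := hG.exists_walk_length_eq_dist x y
  have htake := dist_le (w.take n)
  have hdrop := dist_le (w.drop n)
  rw [Walk.take_length] at htake
  rw [Walk.drop_length] at hdrop
  have htri : G.dist x y ≤ G.dist x (w.getVert n) + G.dist (w.getVert n) y := hG.dist_triangle
  exact ⟨w.getVert n, by omega, by omega⟩

variable [G.LocallyFinite]

variable (G) in
open Classical in
/-- The closed ball of radius `n` around `x` in a locally finite graph, as a finset. Mathlib's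
`SimpleGraph.ball` is the corresponding open ball, as a set. -/
noncomputable def closedBallFinset (x : X) : ℕ → Finset X
  | 0 => {x}
  | n + 1 => (closedBallFinset x n).biUnion fun y => insert y (G.neighborFinset y)

lemma mem_closedBallFinset (hG : G.Connected) : y ∈ closedBallFinset G x n ↔ G.dist x y ≤ n := by
  induction n generalizing y with
  | zero => rw [closedBallFinset, mem_singleton, Nat.le_zero, hG.dist_eq_zero_iff, eq_comm]
  | succ n ih =>
    simp only [closedBallFinset, mem_biUnion, ih, mem_insert, mem_neighborFinset]
    constructor
    · rintro ⟨z, hz, rfl | hzy⟩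
      · exact hz.trans n.le_succ
      · have htri : G.dist x y ≤ G.dist x z + G.dist z y := hG.dist_triangle
        rw [dist_eq_one_iff_adj.2 hzy] at htri
        omega
    · intro h
      obtain ⟨z, hxz, hzy⟩ := exists_dist_eq_and_add_dist_eq hG (min_le_right n (G.dist x y))
      refine ⟨z, by omega, ?_⟩
      rcases Nat.le_one_iff_eq_zero_or_eq_one.1 (show G.dist z y ≤ 1 by omega) with h0 | h1
      · exact Or.inl (hG.dist_eq_zero_iff.1 h0).symm
      · exact Or.inr (dist_eq_one_iff_adj.1 h1)

lemma finite_setOf_dist_le (hG : G.Connected) (x : X) (R : ℝ) :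
    {y | (G.dist x y : ℝ) ≤ R}.Finite :=
  (closedBallFinset G x ⌊R⌋₊).finite_toSet.subset fun _ hy =>
    (mem_closedBallFinset hG).2 (Nat.le_floor hy)

variable {Δ : ℕ}

lemma card_closedBallFinset_le (hΔ : ∀ v, G.degree v ≤ Δ) (x : X) (n : ℕ) :
    #(closedBallFinset G x n) ≤ (Δ + 1) ^ n := by
  induction n with
  | zero => simp [closedBallFinset]
  | succ n ih =>
    classical
    rw [pow_succ]
    refine (card_biUnion_le_card_mul _ _ (Δ + 1) fun y _ => ?_).trans (Nat.mul_le_mul_right _ ih)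
    exact (card_insert_le _ _).trans (Nat.succ_le_succ (hΔ y))

lemma summable_pow_dist (hG : G.Connected) (hΔ : ∀ v, G.degree v ≤ Δ) (x : X) {t : ℝ} (ht : 0 ≤ t)
    (hlt : (Δ + 1) * t < 1) : Summable fun a => t ^ G.dist x a := by
  have hcard_sphere : ∀ (F : Finset X) (n : ℕ), #{a ∈ F | G.dist x a = n} ≤ (Δ + 1) ^ n := by
    refine fun F n => (card_le_card fun a ha => ?_).trans (card_closedBallFinset_le hΔ x n)
    exact (mem_closedBallFinset hG).2 (mem_filter.1 ha).2.le
  have hgeom := summable_geometric_of_lt_one (show 0 ≤ (Δ + 1) * t by positivity) hlt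
  refine summable_of_sum_le (fun a => by positivity) (c := ∑' n : ℕ, ((Δ + 1) * t) ^ n) fun F => ?_
  calc ∑ a ∈ F, t ^ G.dist x a
      = ∑ n ∈ F.image (G.dist x), ∑ a ∈ F with G.dist x a = n, t ^ n :=
        (sum_fiberwise_of_maps_to' (fun a ha => mem_image_of_mem _ ha) _).symm
    _ ≤ ∑ n ∈ F.image (G.dist x), ((Δ + 1) * t) ^ n := by
        gcongr with n
        rw [sum_const, nsmul_eq_mul, mul_pow]
        gcongr
        exact_mod_cast hcard_sphere F n
    _ ≤ ∑' n : ℕ, ((Δ + 1) * t) ^ n := hgeom.sum_le_tsum _ fun n _ => by positivity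

end GraphDistance

section Lp

variable {α : Type*} {E : α → Type*} [∀ i, NormedAddCommGroup (E i)] {p : ENNReal}

lemma card_mul_rpow_le_norm_rpow (hp : 0 < p.toReal) (f : lp E p) {s : Finset α} {c : ℝ}
    (hc : 0 ≤ c) (h : ∀ i ∈ s, c ≤ ‖f i‖) : #s * c ^ p.toReal ≤ ‖f‖ ^ p.toReal := by
  rw [← nsmul_eq_mul]
  refine (card_nsmul_le_sum _ _ _ fun i hi => ?_).trans (lp.sum_rpow_le_norm_rpow hp f s)
  exact Real.rpow_le_rpow hc (h i hi) hp.le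

lemma exists_forall_mul_rpow_lt_one {θ : ℝ} (c : ℝ) (hθ : 0 ≤ θ) (hlt : θ < 1) :
    ∃ p₀ : ℝ, 1 ≤ p₀ ∧ ∀ p, p₀ ≤ p → c * θ ^ p < 1 := by
  have hlim := (tendsto_rpow_atTop_of_base_lt_one θ (by linarith) hlt).const_mul c
  rw [mul_zero] at hlim
  obtain ⟨p₀, hp₀⟩ := Filter.eventually_atTop.1 (hlim.eventually_lt_const one_pos)
  exact ⟨max 1 p₀, le_max_left _ _, fun p hp => hp₀ p ((le_max_right _ _).trans hp)⟩

lemma memℓp_of_norm_le_mul_pow_dist {X ι E : Type*} [Finite ι] [NormedAddCommGroup E]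
    {G : SimpleGraph X} [G.LocallyFinite] {Δ : ℕ} (hG : G.Connected)
    (hΔ : ∀ v, G.degree v ≤ Δ) {C θ p : ℝ} (hC : 0 ≤ C) (hθ : 0 ≤ θ)
    (hp : 0 < p) (hlt : (Δ + 1) * θ ^ p < 1) {f : X × ι → E} (x : X)
    (hf : ∀ q, ‖f q‖ ≤ C * θ ^ G.dist x q.1) : Memℓp f (ENNReal.ofReal p) := by
  have hsum : Summable fun q : X × ι => (θ ^ p) ^ G.dist x q.1 * C ^ p :=
    (summable_pow_dist hG hΔ x (by positivity) hlt).mul_of_nonneg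
      (Summable.of_finite (f := fun _ : ι => C ^ p)) (fun a => by positivity)
      (fun _ => by positivity)
  refine memℓp_gen ?_
  rw [ENNReal.toReal_ofReal hp.le]
  refine hsum.of_nonneg_of_le (fun q => by positivity) fun q => ?_
  calc ‖f q‖ ^ p ≤ (C * θ ^ G.dist x q.1) ^ p :=
        Real.rpow_le_rpow (norm_nonneg _) (hf q) hp.le
    _ = (θ ^ p) ^ G.dist x q.1 * C ^ p := by
        rw [Real.mul_rpow hC (by positivity), ← Real.rpow_pow_comm hθ, mul_comm]

end Lp

section Cayley

variable {Γ : Type*} [Group Γ] {S : Set Γ}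

lemma edist_mulCayley_mul_prod_le {l : List Γ} (hl : ∀ s ∈ l, s ∈ S ∨ s⁻¹ ∈ S) (g : Γ) :
    (mulCayley S).edist g (g * l.prod) ≤ l.length := by
  induction l generalizing g with
  | nil => simp
  | cons s l ih =>
    have hstep : (mulCayley S).edist g (g * s) ≤ 1 := by
      rw [edist_le_one_iff_adj_or_eq, mulCayley_adj]
      by_cases hg : g = g * s
      · exact Or.inr hg
      · exact Or.inl ⟨hg, by simpa using hl s List.mem_cons_self⟩
    have htail := ih (fun t ht => hl t (List.mem_cons_of_mem _ ht)) (g * s)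
    rw [List.prod_cons, ← mul_assoc, List.length_cons, Nat.cast_succ, add_comm]
    exact SimpleGraph.edist_triangle.trans (add_le_add hstep htail)

lemma exists_list_prod_eq_of_walk_mulCayley {g h : Γ} (w : (mulCayley S).Walk g h) :
    ∃ l : List Γ, l.length = w.length ∧ (∀ s ∈ l, s ∈ S ∨ s⁻¹ ∈ S) ∧ l.prod = g⁻¹ * h := by
  induction w with
  | nil => exact ⟨[], by simp⟩
  | @cons g k h hadj w ih =>
    obtain ⟨l, hlen, hl, hprod⟩ := ih
    refine ⟨(g⁻¹ * k) :: l, by simp [hlen], List.forall_mem_cons.2 ⟨?_, hl⟩, by simp [hprod]⟩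
    simpa using ((mulCayley_adj S g k).1 hadj).2

lemma connected_mulCayley (hS : Subgroup.closure S = ⊤) : (mulCayley S).Connected where
  preconnected g h := by
    have hmem : g⁻¹ * h ∈ (Subgroup.closure S).toSubmonoid := hS ▸ Subgroup.mem_top _
    rw [Subgroup.closure_toSubmonoid] at hmem
    obtain ⟨l, hl, hprod⟩ := Submonoid.exists_list_of_mem_closure hmem
    have hle := edist_mulCayley_mul_prod_le hl g
    rw [hprod, mul_inv_cancel_left] at hle
    exact edist_ne_top_iff_reachable.1 (hle.trans_lt (ENat.natCast_lt_top _)).ne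

lemma isLeast_dist_mulCayley (hS : (mulCayley S).Connected) (g h : Γ) :
    IsLeast {n : ℕ | ∃ l : List Γ, l.length = n ∧
      (∀ s ∈ l, s ∈ S ∨ s⁻¹ ∈ S) ∧ l.prod = g⁻¹ * h} ((mulCayley S).dist g h) := by
  constructor
  · obtain ⟨w, hw⟩ := hS.exists_walk_length_eq_dist g h
    exact hw ▸ exists_list_prod_eq_of_walk_mulCayley w
  · rintro _ ⟨l, rfl, hl, hprod⟩
    have hle := edist_mulCayley_mul_prod_le hl g
    rw [hprod, mul_inv_cancel_left] at hle
    exact ENat.toNat_le_of_le_natCast hle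

/-- Left translation by `g` as an automorphism of the Cayley graph of `S`. -/
def mulLeftIso (S : Set Γ) (g : Γ) : mulCayley S ≃g mulCayley S where
  toEquiv := Equiv.mulLeft g
  map_rel_iff' := mulCayley_adj_mul_iff_right

lemma mulLeftIso_apply (g h : Γ) : mulLeftIso S g h = g * h := rfl

lemma degree_mulCayley_eq [(mulCayley S).LocallyFinite] (g : Γ) :
    (mulCayley S).degree g = (mulCayley S).degree 1 := by
  simp only [← card_neighborSet_eq_degree]
  rw [Fintype.card_congr ((mulLeftIso S g).mapNeighborSet 1)]
  simp only [mulLeftIso_apply, mul_one]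

lemma exists_equivariant_enumeration_closedBallFinset [(mulCayley S).LocallyFinite]
    (hS : (mulCayley S).Connected) (n : ℕ) :
    ∃ m, ∃ e : Γ → Fin m → Γ, (∀ g a i, e (g * a) i = g * e a i) ∧
      ∀ a, ∀ z ∈ closedBallFinset (mulCayley S) a n, ∃ i, e a i = z := by
  let φ := (closedBallFinset (mulCayley S) 1 n).equivFin
  refine ⟨_, fun a i => a * (φ.symm i : Γ), fun g a i => mul_assoc _ _ _, fun a z hz => ?_⟩
  have hmem : a⁻¹ * z ∈ closedBallFinset (mulCayley S) 1 n := by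
    rw [mem_closedBallFinset hS, ← dist_map_iso (mulLeftIso S a)]
    simpa [mulLeftIso_apply] using (mem_closedBallFinset hS).1 hz
  exact ⟨φ ⟨_, hmem⟩, by simp⟩

lemma finite_neighborSet_mulCayley (hS : S.Finite) (g : Γ) :
    ((mulCayley S).neighborSet g).Finite := by
  refine ((hS.union hS.inv).image (g * ·)).subset fun h hadj => ⟨g⁻¹ * h, ?_, by simp⟩
  simpa using ((mulCayley_adj S g h).1 hadj).2

end Cayley

/-- A connected graph is `δ`-hyperbolic if its path metric satisfies the four point condition.
Distances in a graph are integers, so it is no restriction to take `δ` in `ℕ`. -/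
structure IsHyperbolicGraph {X : Type*} (G : SimpleGraph X) (δ : ℕ) : Prop where
  connected : G.Connected
  four_point : ∀ x y z w,
    G.dist x w + G.dist y z ≤ max (G.dist x y + G.dist z w) (G.dist x z + G.dist y w) + δ

namespace IsHyperbolicGraph

/-- The difference of the radii of the consecutive spheres visited by the random walk. It exceeds
the distance `3 * δ` between two geodesics with nearby endpoints. -/
def sphereGap (δ : ℕ) : ℕ := 3 * δ + 1

variable {X : Type*} {G : SimpleGraph X} {δ Δ : ℕ} {a x x' y y' z w : X} {k n : ℕ}

lemma sphereGap_pos : 0 < sphereGap δ := Nat.succ_pos _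

lemma exists_sphere_level (h : sphereGap δ < n) :
    ∃ k, sphereGap δ * (k + 1) < n ∧ n ≤ sphereGap δ * (k + 2) := by
  have hpos : 0 < sphereGap δ := sphereGap_pos
  obtain ⟨k, hk⟩ := Nat.exists_eq_add_of_le' ((Nat.one_le_div_iff hpos).2 (Nat.le_sub_one_of_lt h))
  have hlower := Nat.mul_div_le (n - 1) (sphereGap δ)
  have hupper := Nat.lt_mul_div_succ (n - 1) hpos
  rw [hk] at hlower hupper
  exact ⟨k, by omega, Nat.le_of_pred_lt hupper⟩

variable [G.LocallyFinite]

variable (G δ) in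
/-- The points at distance `n` from `a` which lie on a geodesic from `x` to `a`, up to an error
`δ`. The random walk towards `a` jumps from `x` to a uniformly distributed such point. -/
noncomputable def steps (a : X) (n : ℕ) (x : X) : Finset X :=
  {y ∈ closedBallFinset G x (G.dist x a + δ) |
    G.dist y a = n ∧ G.dist x y + n ≤ G.dist x a + δ}

variable (G δ) in
open Classical in
/-- The probability that the random walk from `x` towards `a`, which visits the spheres around `a`
whose radii are multiples of `sphereGap δ`, enters the ball of radius `sphereGap δ` at `z`. -/
noncomputable def hitting (a z x : X) : ℝ :=
  if G.dist x a ≤ sphereGap δ then if x = z then 1 else 0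
  else 𝔼 y ∈ (steps G δ a (sphereGap δ * ((G.dist x a - 1) / sphereGap δ)) x).attach,
    hitting a z y
termination_by G.dist x a
decreasing_by
  have hlower := Nat.mul_div_le (G.dist x a - 1) (sphereGap δ)
  have hy := (mem_filter.1 y.2).2.1
  omega

/-- `1 - 1 / (V ^ 2 + 1)`, where `V` bounds the number of possible steps from a point to the
preceding sphere: two walks started at nearby points meet in one step with probability at least
`1 / V ^ 2`. The summand `1` only serves to make the factor positive. -/
noncomputable def contraction (δ Δ : ℕ) : ℝ :=
  1 - 1 / (((Δ + 1 : ℝ) ^ (sphereGap δ + δ)) ^ 2 + 1)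

/-- The rate, per unit of distance to `a`, at which `hitting G δ a z x` forgets `x`. -/
noncomputable def decayRate (δ Δ : ℕ) : ℝ := contraction δ Δ ^ (1 / sphereGap δ : ℝ)

variable (G δ) in
/-- The hitting probabilities from `x` of all walks, where `e a : ι → X` enumerates possible
endpoints of the walks towards `a`; this is `u(x)` in the outline at the top. -/
noncomputable def hittingProfile {ι : Type*} (e : X → ι → X) (x : X) (q : X × ι) : ℝ :=
  hitting G δ q.1 (e q.1 q.2) x

section RandomWalk

lemma mem_steps (hG : G.Connected) :
    y ∈ steps G δ a n x ↔ G.dist y a = n ∧ G.dist x y + n ≤ G.dist x a + δ := by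
  rw [steps, mem_filter, mem_closedBallFinset hG]
  omega

lemma dist_eq_of_mem_steps (h : y ∈ steps G δ a n x) : G.dist y a = n :=
  (mem_filter.1 h).2.1

lemma dist_add_le_of_mem_steps (h : y ∈ steps G δ a n x) :
    G.dist x y + n ≤ G.dist x a + δ :=
  (mem_filter.1 h).2.2

lemma steps_nonempty (hG : G.Connected) (h : n ≤ G.dist x a) : (steps G δ a n x).Nonempty := by
  obtain ⟨y, hxy, hya⟩ := exists_dist_eq_and_add_dist_eq hG (Nat.sub_le (G.dist x a) n)
  exact ⟨y, (mem_steps hG).2 ⟨by omega, by omega⟩⟩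

lemma map_steps (hG : G.Connected) (φ : G ≃g G) :
    (steps G δ a n x).map φ.toEquiv.toEmbedding = steps G δ (φ a) n (φ x) := by
  ext y
  obtain ⟨y, rfl⟩ := φ.surjective y
  rw [mem_steps hG, dist_map_iso, dist_map_iso, dist_map_iso, ← mem_steps hG]
  exact mem_map' φ.toEquiv.toEmbedding

open Classical in
lemma hitting_of_le (h : G.dist x a ≤ sphereGap δ) :
    hitting G δ a z x = if x = z then 1 else 0 := by
  rw [hitting, if_pos h]

lemma hitting_of_lt (h : sphereGap δ * (k + 1) < G.dist x a)
    (h' : G.dist x a ≤ sphereGap δ * (k + 2)) :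
    hitting G δ a z x = 𝔼 y ∈ steps G δ a (sphereGap δ * (k + 1)) x, hitting G δ a z y := by
  have hlevel : (G.dist x a - 1) / sphereGap δ = k + 1 :=
    Nat.div_eq_of_lt_le (by rw [mul_comm]; omega)
      (by rw [mul_comm]; exact Nat.sub_one_lt_of_le (by omega) h')
  have hgap : sphereGap δ ≤ sphereGap δ * (k + 1) := Nat.le_mul_of_pos_right _ k.succ_pos
  rw [hitting, if_neg (by omega), hlevel, expect, expect, card_attach,
    sum_attach _ fun y => hitting G δ a z y]

lemma step_induction {P : X → Prop} (a : X) (base : ∀ x, G.dist x a ≤ sphereGap δ → P x)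
    (step : ∀ k x, sphereGap δ * (k + 1) < G.dist x a → G.dist x a ≤ sphereGap δ * (k + 2) →
      (∀ y ∈ steps G δ a (sphereGap δ * (k + 1)) x, P y) → P x) (x : X) : P x := by
  induction hn : G.dist x a using Nat.strong_induction_on generalizing x with
  | h n ih =>
    rcases le_or_gt (G.dist x a) (sphereGap δ) with hx | hx
    · exact base x hx
    · obtain ⟨k, hk, hk'⟩ := exists_sphere_level hx
      exact step k x hk hk' fun y hy => ih _ (by rw [dist_eq_of_mem_steps hy]; omega) y rfl

lemma hitting_mem_Icc (hG : G.Connected) (a z x : X) : hitting G δ a z x ∈ Set.Icc (0 : ℝ) 1 := by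
  induction x using step_induction (G := G) (δ := δ) a with
  | base x hx =>
    rw [hitting_of_le hx]
    split_ifs <;> simp
  | step k x hk hk' ih =>
    have hne : (steps G δ a (sphereGap δ * (k + 1)) x).Nonempty := steps_nonempty hG hk.le
    rw [hitting_of_lt hk hk']
    exact ⟨le_expect hne fun y hy => (ih y hy).1, expect_le hne fun y hy => (ih y hy).2⟩

lemma abs_hitting_sub_le_one (hG : G.Connected) (a z x x' : X) :
    |hitting G δ a z x - hitting G δ a z x'| ≤ 1 :=
  Real.dist_le_of_mem_Icc_01 (hitting_mem_Icc hG a z x) (hitting_mem_Icc hG a z x')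

lemma sum_hitting (hG : G.Connected) (a x : X) :
    ∑ z ∈ closedBallFinset G a (sphereGap δ), hitting G δ a z x = 1 := by
  classical
  induction x using step_induction (G := G) (δ := δ) a with
  | base x hx =>
    have hmem : x ∈ closedBallFinset G a (sphereGap δ) := by
      rwa [mem_closedBallFinset hG, dist_comm]
    simp only [hitting_of_le hx, sum_ite_eq, if_pos hmem]
  | step k x hk hk' ih =>
    simp only [hitting_of_lt hk hk']
    rw [← expect_sum_comm, expect_congr rfl ih, expect_const (steps_nonempty hG hk.le)]

lemma hitting_map_iso (hG : G.Connected) (φ : G ≃g G) (a z x : X) :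
    hitting G δ (φ a) (φ z) (φ x) = hitting G δ a z x := by
  classical
  induction x using step_induction (G := G) (δ := δ) a with
  | base x hx =>
    rw [hitting_of_le hx, hitting_of_le (by rwa [dist_map_iso])]
    exact if_congr φ.injective.eq_iff rfl rfl
  | step k x hk hk' ih =>
    rw [hitting_of_lt hk hk', hitting_of_lt (k := k) (by rwa [dist_map_iso])
      (by rwa [dist_map_iso]), ← map_steps hG, expect, expect, card_map, sum_map]
    exact congrArg _ (sum_congr rfl ih)

lemma hittingProfile_map_iso (hG : G.Connected) (φ : G ≃g G) {ι : Type*} {e : X → ι → X}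
    (he : ∀ a i, e (φ a) i = φ (e a i)) (x a : X) (i : ι) :
    hittingProfile G δ e (φ x) (φ a, i) = hittingProfile G δ e x (a, i) := by
  simp only [hittingProfile, he, hitting_map_iso hG]

end RandomWalk

section Contraction

lemma dist_le_of_mem_steps (hG : IsHyperbolicGraph G δ)
    (hx : 2 * n + G.dist x x' ≤ G.dist x a + G.dist x' a) (hy : y ∈ steps G δ a n x)
    (hy' : y' ∈ steps G δ a n x') : G.dist y y' ≤ 3 * δ := by
  obtain ⟨hya, hxy⟩ := (mem_steps hG.connected).1 hy
  obtain ⟨hya', hxy'⟩ := (mem_steps hG.connected).1 hy'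
  have hfour_y := hG.four_point y a x x'
  have hfour_y' := hG.four_point y a x' y'
  rw [dist_comm (u := y) (v := x), dist_comm (u := a) (v := x), dist_comm (u := a) (v := x')]
    at hfour_y
  rw [dist_comm (u := a) (v := x'), dist_comm (u := a) (v := y')] at hfour_y'
  omega

lemma card_steps_le (hG : G.Connected) (hΔ : ∀ v, G.degree v ≤ Δ)
    (h : G.dist x a = n + sphereGap δ) :
    #(steps G δ a n x) ≤ (Δ + 1) ^ (sphereGap δ + δ) := by
  refine (card_le_card fun y hy => ?_).trans (card_closedBallFinset_le hΔ x _)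
  have hxy := dist_add_le_of_mem_steps hy
  exact (mem_closedBallFinset hG).2 (by omega)

lemma exists_mem_steps_of_dist_le (hG : IsHyperbolicGraph G δ)
    (hx : G.dist x a = n + sphereGap δ) (hx' : G.dist x' a = n + sphereGap δ)
    (h : G.dist x x' ≤ 3 * δ) : ∃ y, y ∈ steps G δ a n x ∧ y ∈ steps G δ a n x' := by
  obtain ⟨y, hxy, hya⟩ := exists_dist_eq_and_add_dist_eq hG.connected
    (show sphereGap δ ≤ G.dist x a by omega)
  refine ⟨y, (mem_steps hG.connected).2 ⟨by omega, by omega⟩,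
    (mem_steps hG.connected).2 ⟨by omega, ?_⟩⟩
  have hfour := hG.four_point y a x x'
  rw [dist_comm (u := y) (v := x), dist_comm (u := a) (v := x), dist_comm (u := a) (v := x'),
    dist_comm (u := y) (v := x')] at hfour
  have hgap : sphereGap δ = 3 * δ + 1 := rfl
  omega

lemma contraction_pos : 0 < contraction δ Δ := by
  rw [contraction, sub_pos, div_lt_one (by positivity)]
  exact lt_add_of_pos_left 1 (by positivity)

lemma contraction_lt_one : contraction δ Δ < 1 :=
  sub_lt_self 1 (by positivity)

lemma one_sub_inv_card_mul_card_le_contraction {s t : Finset X} (hs : s.Nonempty)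
    (ht : t.Nonempty) (hcard_s : #s ≤ (Δ + 1) ^ (sphereGap δ + δ))
    (hcard_t : #t ≤ (Δ + 1) ^ (sphereGap δ + δ)) :
    1 - 1 / (#s * #t : ℝ) ≤ contraction δ Δ := by
  have hprod : #s * #t ≤ ((Δ + 1) ^ (sphereGap δ + δ)) ^ 2 + 1 := by
    rw [sq]
    exact (Nat.mul_le_mul hcard_s hcard_t).trans (Nat.le_succ _)
  have hpos : (0 : ℝ) < #s * #t := by exact_mod_cast Nat.mul_pos hs.card_pos ht.card_pos
  refine sub_le_sub_left (one_div_le_one_div_of_le hpos ?_) 1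
  exact_mod_cast hprod

lemma abs_hitting_sub_le_of_sphere (hG : IsHyperbolicGraph G δ) (hΔ : ∀ v, G.degree v ≤ Δ)
    (z : X) (hy : G.dist y a = sphereGap δ * (k + 1)) (hy' : G.dist y' a = sphereGap δ * (k + 1))
    (h : G.dist y y' ≤ 3 * δ) :
    |hitting G δ a z y - hitting G δ a z y'| ≤ contraction δ Δ ^ k := by
  induction k generalizing y y' with
  | zero => simpa using abs_hitting_sub_le_one hG.connected a z y y'
  | succ k ih =>
    have hgap : sphereGap δ = 3 * δ + 1 := rfl
    have hy_eq : G.dist y a = sphereGap δ * (k + 1) + sphereGap δ := hy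
    have hy_eq' : G.dist y' a = sphereGap δ * (k + 1) + sphereGap δ := hy'
    obtain ⟨u, hu, hu'⟩ := exists_mem_steps_of_dist_le hG hy_eq hy_eq' h
    rw [hitting_of_lt (by omega) hy.le, hitting_of_lt (by omega) hy'.le, pow_succ']
    refine (abs_expect_sub_expect_le_of_mem hu hu' fun v hv v' hv' =>
      ih (dist_eq_of_mem_steps hv) (dist_eq_of_mem_steps hv')
        (dist_le_of_mem_steps hG (by omega) hv hv')).trans ?_
    refine mul_le_mul_of_nonneg_right ?_ (pow_nonneg contraction_pos.le k)
    exact one_sub_inv_card_mul_card_le_contraction ⟨u, hu⟩ ⟨u, hu'⟩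
      (card_steps_le hG.connected hΔ hy_eq) (card_steps_le hG.connected hΔ hy_eq')

lemma abs_hitting_sub_le_of_adjacent (hG : IsHyperbolicGraph G δ) (hΔ : ∀ v, G.degree v ≤ Δ)
    (z : X) (hd : G.dist x x' ≤ 1) (hx : sphereGap δ * (k + 1) < G.dist x a)
    (hx' : G.dist x a ≤ sphereGap δ * (k + 2)) (hle : G.dist x' a ≤ G.dist x a) :
    |hitting G δ a z x - hitting G δ a z x'| ≤ contraction δ Δ ^ k := by
  have hne : (steps G δ a (sphereGap δ * (k + 1)) x).Nonempty := steps_nonempty hG.connected hx.le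
  have htri : G.dist x a ≤ G.dist x x' + G.dist x' a := hG.connected.dist_triangle
  rw [hitting_of_lt hx hx']
  -- the walk from `x` makes its next step alone if `x'` lies on the sphere that it jumps to
  rcases (show sphereGap δ * (k + 1) ≤ G.dist x' a by omega).eq_or_lt with heq | hlt
  · have hself : x' ∈ steps G δ a (sphereGap δ * (k + 1)) x' :=
      (mem_steps hG.connected).2 ⟨heq.symm, by rw [dist_self]; omega⟩
    rw [← expect_singleton (hitting G δ a z) x']
    refine abs_expect_sub_expect_le hne (singleton_nonempty x') fun u hu v hv => ?_
    obtain rfl := mem_singleton.1 hv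
    exact abs_hitting_sub_le_of_sphere hG hΔ z (dist_eq_of_mem_steps hu) heq.symm
      (dist_le_of_mem_steps hG (by omega) hu hself)
  · rw [hitting_of_lt hlt (hle.trans hx')]
    refine abs_expect_sub_expect_le hne (steps_nonempty hG.connected hlt.le) fun u hu v hv => ?_
    exact abs_hitting_sub_le_of_sphere hG hΔ z (dist_eq_of_mem_steps hu) (dist_eq_of_mem_steps hv)
      (dist_le_of_mem_steps hG (by omega) hu hv)

lemma decayRate_pos : 0 < decayRate δ Δ :=
  Real.rpow_pos_of_pos contraction_pos _

lemma decayRate_lt_one : decayRate δ Δ < 1 :=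
  Real.rpow_lt_one contraction_pos.le contraction_lt_one
    (one_div_pos.2 (Nat.cast_pos.2 sphereGap_pos))

lemma decayRate_pow_sphereGap : decayRate δ Δ ^ sphereGap δ = contraction δ Δ := by
  rw [decayRate, one_div, Real.rpow_inv_natCast_pow contraction_pos.le sphereGap_pos.ne']

lemma contraction_pow_le (h : n ≤ sphereGap δ * (k + 2)) :
    contraction δ Δ ^ k ≤ (contraction δ Δ ^ 2)⁻¹ * decayRate δ Δ ^ n := by
  have hpos : 0 < contraction δ Δ ^ 2 := pow_pos contraction_pos 2
  rw [le_inv_mul_iff₀ hpos, ← pow_add, ← decayRate_pow_sphereGap, ← pow_mul]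
  exact pow_le_pow_of_le_one decayRate_pos.le decayRate_lt_one.le (by rwa [add_comm 2])

lemma abs_hitting_sub_le_pow (hG : IsHyperbolicGraph G δ) (hΔ : ∀ v, G.degree v ≤ Δ) (a z : X)
    (hd : G.dist x x' ≤ 1) :
    |hitting G δ a z x - hitting G δ a z x'| ≤
      (contraction δ Δ ^ 2)⁻¹ * decayRate δ Δ ^ G.dist x a := by
  wlog hle : G.dist x' a ≤ G.dist x a generalizing x x'
  · rw [abs_sub_comm]
    refine (this (by rwa [dist_comm]) (le_of_not_ge hle)).trans ?_
    have hpos : 0 < contraction δ Δ ^ 2 := pow_pos contraction_pos 2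
    gcongr ?_ * ?_
    exact pow_le_pow_of_le_one decayRate_pos.le decayRate_lt_one.le (le_of_not_ge hle)
  rcases le_or_gt (G.dist x a) (sphereGap δ) with hx | hx
  · have h1 := contraction_pow_le (Δ := Δ) (k := 0)
      (hx.trans (Nat.le_mul_of_pos_right _ two_pos))
    exact (abs_hitting_sub_le_one hG.connected a z x x').trans (by simpa using h1)
  · obtain ⟨k, hk, hk'⟩ := exists_sphere_level hx
    exact (abs_hitting_sub_le_of_adjacent hG hΔ z hd hk hk' hle).trans (contraction_pow_le hk')

end Contraction

section Separation

lemma exists_mem_steps_dist_eq (hG : G.Connected) (hw : G.dist w a = sphereGap δ)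
    (hxw : G.dist x w + sphereGap δ = G.dist x a) (hk : sphereGap δ * (k + 1) ≤ G.dist x a) :
    ∃ y ∈ steps G δ a (sphereGap δ * (k + 1)) x, G.dist y w = sphereGap δ * k := by
  rw [Nat.mul_succ] at hk ⊢
  obtain ⟨y, hxy, hyw⟩ := exists_dist_eq_and_add_dist_eq hG
    (Nat.sub_le (G.dist x w) (sphereGap δ * k))
  have htri_y : G.dist y a ≤ G.dist y w + G.dist w a := hG.dist_triangle
  have htri_x : G.dist x a ≤ G.dist x y + G.dist y a := hG.dist_triangle
  exact ⟨y, (mem_steps hG).2 ⟨by omega, by omega⟩, by omega⟩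

lemma dist_le_of_hitting_ne_zero_of_sphere (hG : IsHyperbolicGraph G δ)
    (hw : G.dist w a = sphereGap δ) (hx : G.dist x a = sphereGap δ * (k + 1))
    (hy : G.dist y a = sphereGap δ * (k + 1)) (h : G.dist x y ≤ 3 * δ)
    (hyw : G.dist y w = sphereGap δ * k) (hz : hitting G δ a z x ≠ 0) : G.dist z w ≤ 3 * δ := by
  induction k generalizing x y with
  | zero =>
    rw [hitting_of_le (by omega)] at hz
    obtain rfl : x = z := by_contra fun hne => hz (if_neg hne)
    obtain rfl : y = w := hG.connected.dist_eq_zero_iff.1 hyw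
    exact h
  | succ k ih =>
    have hgap : sphereGap δ = 3 * δ + 1 := rfl
    have hlevel : sphereGap δ * (k + 1 + 1) = sphereGap δ * (k + 1) + sphereGap δ := rfl
    rw [hitting_of_lt (by omega) hx.le] at hz
    obtain ⟨u, hu, huz⟩ := exists_ne_zero_of_expect_ne_zero hz
    obtain ⟨v, hv, hvw⟩ := exists_mem_steps_dist_eq (k := k) hG.connected hw
      (x := y) (by omega) (by omega)
    exact ih (dist_eq_of_mem_steps hu) (dist_eq_of_mem_steps hv)
      (dist_le_of_mem_steps hG (by omega) hu hv) hvw huz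

lemma dist_le_of_hitting_ne_zero (hG : IsHyperbolicGraph G δ) (hw : G.dist w a = sphereGap δ)
    (hxw : G.dist x w + sphereGap δ = G.dist x a) (hx : sphereGap δ < G.dist x a)
    (hz : hitting G δ a z x ≠ 0) : G.dist z w ≤ 3 * δ := by
  obtain ⟨k, hk, hk'⟩ := exists_sphere_level hx
  rw [hitting_of_lt hk hk'] at hz
  obtain ⟨u, hu, huz⟩ := exists_ne_zero_of_expect_ne_zero hz
  obtain ⟨v, hv, hvw⟩ := exists_mem_steps_dist_eq hG.connected hw hxw hk.le
  exact dist_le_of_hitting_ne_zero_of_sphere hG hw (dist_eq_of_mem_steps hu)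
    (dist_eq_of_mem_steps hv) (dist_le_of_mem_steps hG (by rw [dist_self]; omega) hu hv) hvw huz

lemma hitting_eq_zero_or_of_dist_add_dist_eq (hG : IsHyperbolicGraph G δ)
    (h : G.dist x a + G.dist y a = G.dist x y) (hx : sphereGap δ < G.dist x a)
    (hy : sphereGap δ < G.dist y a) (z : X) :
    hitting G δ a z x = 0 ∨ hitting G δ a z y = 0 := by
  by_contra! hne
  obtain ⟨w, hxw, hadd⟩ := exists_dist_eq_and_add_dist_eq hG.connected
    (Nat.sub_le (G.dist x a) (sphereGap δ))
  obtain ⟨w', hyw', hadd'⟩ := exists_dist_eq_and_add_dist_eq hG.connected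
    (Nat.sub_le (G.dist y a) (sphereGap δ))
  have hwa : G.dist w a = sphereGap δ := by omega
  have hwa' : G.dist w' a = sphereGap δ := by omega
  have hzw := dist_le_of_hitting_ne_zero hG hwa (by omega) hx hne.1
  have hzw' := dist_le_of_hitting_ne_zero hG hwa' (by omega) hy hne.2
  have htri : G.dist w w' ≤ G.dist w z + G.dist z w' := hG.connected.dist_triangle
  have htri_xy : G.dist x y ≤ G.dist x w + G.dist w y := hG.connected.dist_triangle
  have htri_wy : G.dist w y ≤ G.dist w w' + G.dist w' y := hG.connected.dist_triangle
  rw [dist_comm (u := w) (v := z)] at htri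
  rw [dist_comm (u := w') (v := y)] at htri_wy
  have hgap : sphereGap δ = 3 * δ + 1 := rfl
  omega

lemma exists_inv_le_hitting (hG : G.Connected) (hΔ : ∀ v, G.degree v ≤ Δ) (a x : X) :
    ∃ z ∈ closedBallFinset G a (sphereGap δ),
      ((Δ + 1 : ℝ) ^ sphereGap δ)⁻¹ ≤ hitting G δ a z x := by
  have hcard : (#(closedBallFinset G a (sphereGap δ)) : ℝ) ≤ (Δ + 1) ^ sphereGap δ := by
    exact_mod_cast card_closedBallFinset_le hΔ a _
  refine exists_le_of_sum_le ⟨a, (mem_closedBallFinset hG).2 (by rw [dist_self]; omega)⟩ ?_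
  rw [sum_hitting hG, sum_const, nsmul_eq_mul]
  exact mul_inv_le_one_of_le₀ hcard (by positivity)

lemma exists_inv_le_abs_hitting_sub (hG : IsHyperbolicGraph G δ) (hΔ : ∀ v, G.degree v ≤ Δ)
    (h : G.dist x a + G.dist y a = G.dist x y) (hx : sphereGap δ < G.dist x a)
    (hy : sphereGap δ < G.dist y a) :
    ∃ z ∈ closedBallFinset G a (sphereGap δ),
      ((Δ + 1 : ℝ) ^ sphereGap δ)⁻¹ ≤ |hitting G δ a z x - hitting G δ a z y| := by
  obtain ⟨z, hz, hle⟩ := exists_inv_le_hitting (δ := δ) hG.connected hΔ a x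
  have hpos : 0 < hitting G δ a z x := lt_of_lt_of_le (by positivity) hle
  have hzero : hitting G δ a z y = 0 :=
    (hitting_eq_zero_or_of_dist_add_dist_eq hG h hx hy z).resolve_left hpos.ne'
  exact ⟨z, hz, by rwa [hzero, sub_zero, abs_of_pos hpos]⟩

end Separation

section Profile

variable {ι : Type*} {p : ℝ}

lemma memℓp_hittingProfile_sub [Finite ι] (hG : IsHyperbolicGraph G δ)
    (hΔ : ∀ v, G.degree v ≤ Δ) (hp : 0 < p) (hlt : (Δ + 1) * decayRate δ Δ ^ p < 1)
    (e : X → ι → X) (x y : X) :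
    Memℓp (hittingProfile G δ e x - hittingProfile G δ e y) (ENNReal.ofReal p) := by
  have hadj : ∀ ⦃x y⦄, G.dist x y ≤ 1 →
      Memℓp (hittingProfile G δ e x - hittingProfile G δ e y) (ENNReal.ofReal p) := fun x y hxy =>
    memℓp_of_norm_le_mul_pow_dist hG.connected hΔ (inv_nonneg.2 (pow_pos contraction_pos 2).le)
      decayRate_pos.le hp hlt x fun q => abs_hitting_sub_le_pow hG hΔ q.1 _ hxy
  induction hn : G.dist x y generalizing x with
  | zero => exact hadj (by omega)
  | succ n ih =>
    obtain ⟨z, hxz, hzy⟩ := exists_dist_eq_and_add_dist_eq hG.connected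
      (show 1 ≤ G.dist x y by omega)
    simpa using (hadj hxz.le).add (ih z (by omega))

lemma exists_finset_inv_le_abs_hittingProfile_sub (hG : IsHyperbolicGraph G δ)
    (hΔ : ∀ v, G.degree v ≤ Δ) {e : X → ι → X}
    (he : ∀ a, ∀ z ∈ closedBallFinset G a (sphereGap δ), ∃ i, e a i = z) (x y : X) :
    ∃ s : Finset (X × ι), G.dist x y ≤ #s + 2 * sphereGap δ + 1 ∧ ∀ q ∈ s,
      ((Δ + 1 : ℝ) ^ sphereGap δ)⁻¹ ≤ |hittingProfile G δ e x q - hittingProfile G δ e y q| := by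
  classical
  have hex : ∀ j : Ioo (sphereGap δ) (G.dist x y - sphereGap δ), ∃ q : X × ι,
      G.dist x q.1 = j ∧
        ((Δ + 1 : ℝ) ^ sphereGap δ)⁻¹ ≤ |hittingProfile G δ e x q - hittingProfile G δ e y q| := by
    rintro ⟨j, hj⟩
    rw [mem_Ioo] at hj
    obtain ⟨a, hxa, hay⟩ := exists_dist_eq_and_add_dist_eq hG.connected
      (show j ≤ G.dist x y by omega)
    rw [dist_comm] at hay
    obtain ⟨z, hz, hle⟩ := exists_inv_le_abs_hitting_sub hG hΔ (x := x) (y := y) (a := a)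
      (by omega) (by omega) (by omega)
    obtain ⟨i, rfl⟩ := he a z hz
    exact ⟨(a, i), hxa, hle⟩
  choose q hdist hle using hex
  have hinj : Function.Injective q := fun i j hij => Subtype.ext (by rw [← hdist, hij, hdist])
  refine ⟨univ.map ⟨q, hinj⟩, ?_, forall_mem_map.2 fun j _ => hle j⟩
  rw [card_map, card_univ, Fintype.card_coe, Nat.card_Ioo]
  omega

lemma dist_le_rpow_of_norm_le (hG : IsHyperbolicGraph G δ) (hΔ : ∀ v, G.degree v ≤ Δ)
    (hp : 0 < p) {e : X → ι → X}
    (he : ∀ a, ∀ z ∈ closedBallFinset G a (sphereGap δ), ∃ i, e a i = z) {M : ℝ}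
    {f : lp (fun _ : X × ι => ℝ) (ENNReal.ofReal p)}
    (hf : ⇑f = hittingProfile G δ e x - hittingProfile G δ e y) (hM : ‖f‖ ≤ M) :
    (G.dist x y : ℝ) ≤ ((Δ + 1) ^ sphereGap δ * M) ^ p + 2 * sphereGap δ + 1 := by
  obtain ⟨s, hdist, hs⟩ := exists_finset_inv_le_abs_hittingProfile_sub hG hΔ he x y
  have hnorm : 0 ≤ ‖f‖ := lp.norm_nonneg' f
  have hcard := card_mul_rpow_le_norm_rpow (by rwa [ENNReal.toReal_ofReal hp.le]) f (s := s)
    (c := ((Δ + 1 : ℝ) ^ sphereGap δ)⁻¹) (by positivity) fun q hq => by rw [hf]; exact hs q hq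
  rw [ENNReal.toReal_ofReal hp.le, Real.inv_rpow (by positivity),
    mul_inv_le_iff₀ (by positivity), mul_comm, ← Real.mul_rpow (by positivity) hnorm]
    at hcard
  calc (G.dist x y : ℝ) ≤ #s + 2 * sphereGap δ + 1 := by exact_mod_cast hdist
    _ ≤ ((Δ + 1) ^ sphereGap δ * ‖f‖) ^ p + 2 * sphereGap δ + 1 := by gcongr
    _ ≤ ((Δ + 1) ^ sphereGap δ * M) ^ p + 2 * sphereGap δ + 1 := by gcongr

lemma finite_setOf_norm_le (hG : IsHyperbolicGraph G δ) (hΔ : ∀ v, G.degree v ≤ Δ)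
    (hp : 0 < p) {e : X → ι → X}
    (he : ∀ a, ∀ z ∈ closedBallFinset G a (sphereGap δ), ∃ i, e a i = z)
    {b : X → lp (fun _ : X × ι => ℝ) (ENNReal.ofReal p)}
    (hb : ∀ y, ⇑(b y) = hittingProfile G δ e y - hittingProfile G δ e x) (M : ℝ) :
    {y | ‖b y‖ ≤ M}.Finite := by
  refine (finite_setOf_dist_le hG.connected x
    (((Δ + 1) ^ sphereGap δ * M) ^ p + 2 * sphereGap δ + 1)).subset fun y hy => ?_
  rw [Set.mem_ofPred_eq, dist_comm]
  exact dist_le_rpow_of_norm_le hG hΔ hp he (hb y) hy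

end Profile

section Cocycle

variable {Γ ι : Type*} [Group Γ] {S : Set Γ}

lemma hittingProfile_mul_sub_hittingProfile_one [(mulCayley S).LocallyFinite]
    (hS : (mulCayley S).Connected) {e : Γ → ι → Γ} (he : ∀ g a i, e (g * a) i = g * e a i)
    (g h x : Γ) (i : ι) :
    hittingProfile (mulCayley S) δ e (g * h) (x, i) - hittingProfile (mulCayley S) δ e 1 (x, i) =
      hittingProfile (mulCayley S) δ e g (x, i) - hittingProfile (mulCayley S) δ e 1 (x, i) +
      (hittingProfile (mulCayley S) δ e h (g⁻¹ * x, i) -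
        hittingProfile (mulCayley S) δ e 1 (g⁻¹ * x, i)) := by
  have htranslate : ∀ y, hittingProfile (mulCayley S) δ e (g * y) (x, i) =
      hittingProfile (mulCayley S) δ e y (g⁻¹ * x, i) := fun y => by
    simpa [mulLeftIso_apply] using
      hittingProfile_map_iso hS (mulLeftIso S g) (he g) y (g⁻¹ * x) i
  rw [htranslate h, ← htranslate 1, mul_one]
  ring

theorem exists_proper_lp_cocycle_mulCayley (hG : IsHyperbolicGraph (mulCayley S) δ)
    (hS : S.Finite) :
    ∃ p₀ : ℝ, 1 ≤ p₀ ∧ ∃ m : ℕ, ∀ p : ℝ, p₀ ≤ p →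
      ∃ b : Γ → lp (fun _ : Γ × Fin m => ℝ) (ENNReal.ofReal p),
        (∀ g h x : Γ, ∀ i : Fin m, b (g * h) (x, i) = b g (x, i) + b h (g⁻¹ * x, i)) ∧
        ∀ M : ℝ, {g : Γ | ‖b g‖ ≤ M}.Finite := by
  classical
  let _ : (mulCayley S).LocallyFinite := fun g => (finite_neighborSet_mulCayley hS g).fintype
  obtain ⟨p₀, hp₀, hlt⟩ := exists_forall_mul_rpow_lt_one ((mulCayley S).degree 1 + 1)
    (decayRate_pos (δ := δ) (Δ := (mulCayley S).degree 1)).le decayRate_lt_one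
  obtain ⟨m, e, he_mul, he⟩ :=
    exists_equivariant_enumeration_closedBallFinset hG.connected (sphereGap δ)
  refine ⟨p₀, hp₀, m, fun p hp => ?_⟩
  have hpos : 0 < p := by linarith
  have hΔ : ∀ g, (mulCayley S).degree g ≤ (mulCayley S).degree 1 := fun g =>
    (degree_mulCayley_eq g).le
  let b (g : Γ) : lp (fun _ : Γ × Fin m => ℝ) (ENNReal.ofReal p) :=
    ⟨hittingProfile (mulCayley S) δ e g - hittingProfile (mulCayley S) δ e 1,
      memℓp_hittingProfile_sub hG hΔ hpos (hlt p hp) e g 1⟩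
  exact ⟨b, hittingProfile_mul_sub_hittingProfile_one hG.connected he_mul,
    finite_setOf_norm_le hG hΔ hpos he fun g => rfl⟩

end Cocycle

end IsHyperbolicGraph

lemma isHyperbolicGraph_ceil {X : Type*} {G : SimpleGraph X} (hG : G.Connected) {δ : ℝ}
    (h : ∀ x₁ x₂ x₃ x₄, (G.dist x₁ x₄ : ℝ) + G.dist x₂ x₃ ≤
      max ((G.dist x₁ x₂ : ℝ) + G.dist x₃ x₄) ((G.dist x₁ x₃ : ℝ) + G.dist x₂ x₄) + δ) :
    IsHyperbolicGraph G ⌈δ⌉₊ where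
  connected := hG
  four_point x₁ x₂ x₃ x₄ := by
    exact_mod_cast (h x₁ x₂ x₃ x₄).trans (add_le_add_right (Nat.le_ceil δ) _)

/-- Yu's theorem (Corollary 4.3 of Alvarez–Lafforgue). Let `Γ` be a hyperbolic group,
i.e. a group with a finite generating set `S` whose associated word metric `d` is
`δ`-hyperbolic. Then there are `p₀ ≥ 1` and `m : ℕ` such that for every real `p ≥ p₀`
there is a proper cocycle `b : Γ → ℓ^p(Γ × Fin m)` for the representation
`(π g f) (x, i) = f (g⁻¹ x, i)`; in other words `Γ` admits a proper affine isometric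
action on `ℓ^p` of a finite disjoint union of copies of `Γ`. -/
theorem hyperbolic_group_proper_lp_cocycle
    {Γ : Type*} [Group Γ] (S : Finset Γ)
    (hgen : Subgroup.closure (S : Set Γ) = ⊤)
    (d : Γ → Γ → ℕ)
    (hd : ∀ g h : Γ, IsLeast {n : ℕ | ∃ l : List Γ, l.length = n ∧
      (∀ s ∈ l, s ∈ S ∨ s⁻¹ ∈ S) ∧ l.prod = g⁻¹ * h} (d g h))
    (δ : ℝ) (hδ : 0 ≤ δ)
    (hhyp : ∀ x₁ x₂ x₃ x₄ : Γ, (d x₁ x₄ : ℝ) + (d x₂ x₃ : ℝ) ≤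
      max ((d x₁ x₂ : ℝ) + (d x₃ x₄ : ℝ)) ((d x₁ x₃ : ℝ) + (d x₂ x₄ : ℝ)) + δ) :
    ∃ p₀ : ℝ, 1 ≤ p₀ ∧ ∃ m : ℕ, ∀ p : ℝ, p₀ ≤ p →
      ∃ b : Γ → lp (fun _ : Γ × Fin m => ℝ) (ENNReal.ofReal p),
        -- cocycle identity `b (g h) = b g + π g (b h)` where `(π g f) (x, i) = f (g⁻¹ x, i)`
        (∀ g h x : Γ, ∀ i : Fin m,
          (b (g * h) : Γ × Fin m → ℝ) (x, i) =
            (b g : Γ × Fin m → ℝ) (x, i) + (b h : Γ × Fin m → ℝ) (g⁻¹ * x, i)) ∧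
        -- properness of the cocycle
        (∀ M : ℝ, 0 ≤ M → {g : Γ | ‖b g‖ ≤ M}.Finite) := by
  have hconn : (mulCayley (S : Set Γ)).Connected := connected_mulCayley hgen
  have hdist : ∀ g h, d g h = (mulCayley (S : Set Γ)).dist g h := fun g h =>
    (hd g h).unique (isLeast_dist_mulCayley hconn g h)
  simp only [hdist] at hhyp
  obtain ⟨p₀, hp₀, m, h⟩ :=
    (isHyperbolicGraph_ceil hconn hhyp).exists_proper_lp_cocycle_mulCayley S.finite_toSet
  refine ⟨p₀, hp₀, m, fun p hp => ?_⟩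
  obtain ⟨b, hcocycle, hproper⟩ := h p hp
  exact ⟨b, hcocycle, fun M _ => hproper M⟩
end

section
/- Let δ ≥ 0 be a real number and (X,d) a δ-hyperbolic, weakly δ-geodesic, uniformly locally finite metric space equipped with an isometric action of a group G. Define d'(x,y) to be the least k ∈ ℕ for which there exist points x₀ = x, x₁, …, x_k = y of X with d(x_j, x_{j+1}) ≤ δ + 1 for all 0 ≤ j ≤ k−1. Then d' is a well-defined metric on X satisfying d ≤ (δ+1)·d' and d' ≤ d + 1 (so d and d' are quasi-isometric); moreover (X,d') takes values in ℕ, is geodesic in the discrete sense (for all x,y and every natural number k ≤ d'(x,y) there exists z with d'(x,z) = k and d'(z,y) = d'(x,y) − k), is uniformly locally finite, is δ'-hyperbolic for some real δ' ≥ 0, and G acts on (X,d') by isometries. -/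
/-!
The chain distance is the graph distance of the Rips graph at scale `δ + 1`; only its hyperbolicity
is not formal. A shortest chain is a quasi-geodesic of `X`. The quantities `exp (-ε (x | y)_w)` are,
for small `ε`, within a factor two of a pseudometric, so summing them along a quasi-geodesic, where
they decay geometrically away from the point nearest to `w`, shows that the quasi-geodesic passes at
bounded distance from every `w` at which its endpoints have bounded Gromov product. Hence bounded
Gromov products for `d` are bounded for `d'`. In the four-point condition, the two pairs realising
the largest sum have bounded Gromov products at a common point `w`, and routing `d'` through `w`
gives the condition for `d'`.
-/

open Finset

section Definitions

variable {X : Type*}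

/-- Gromov's four-point condition with constant `η`, for an arbitrary function `d` so that it
applies both to the distance of a metric space and to a graph distance. -/
def IsFourPointHyperbolic (d : X → X → ℝ) (η : ℝ) : Prop :=
  ∀ x₁ x₂ x₃ x₄, d x₁ x₄ + d x₂ x₃ ≤ max (d x₁ x₂ + d x₃ x₄) (d x₁ x₃ + d x₂ x₄) + η

/-- The Gromov product `(x | y)_w` with respect to `d`; in a hyperbolic space it approximates the
distance from `w` to a geodesic between `x` and `y`. -/
noncomputable def gromovProduct (d : X → X → ℝ) (w x y : X) : ℝ :=
  (d w x + d w y - d x y) / 2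

/-- A symmetric nonnegative kernel satisfying the ultrametric inequality up to the factor `K`. The
diagonal is unconstrained, so that `exp (-ε (x | y)_w)` is an example. -/
structure IsQuasiUltrametric (K : ℝ) (ρ : X → X → ℝ) : Prop where
  nonneg : ∀ x y, 0 ≤ ρ x y
  comm : ∀ x y, ρ x y = ρ y x
  le_mul_max : ∀ x y z, ρ x z ≤ K * max (ρ x y) (ρ y z)

variable [PseudoMetricSpace X]

variable (X) in
/-- Weak `δ`-geodesicity: points at every prescribed distance between `x` and `y` exist up to an
error `δ`. -/
def IsWeaklyGeodesic (δ : ℝ) : Prop :=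
  ∀ x y : X, ∀ s : ℝ, 0 ≤ s → s ≤ dist x y + δ →
    ∃ z : X, dist x z ≤ s ∧ dist z y ≤ dist x y - s + δ

/-- The discrete path `c 0, …, c n` has steps at most `L` and is a quasi-geodesic with constants
`a` and `b`; values of `c` beyond `n` are irrelevant. -/
structure IsQuasigeodesic (L a b : ℝ) (c : ℕ → X) (n : ℕ) : Prop where
  step_le : ∀ j < n, dist (c j) (c (j + 1)) ≤ L
  natDist_le : ∀ i ≤ n, ∀ j ≤ n, (Nat.dist i j : ℝ) ≤ a * dist (c i) (c j) + b

variable (X) in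
/-- The Rips graph at scale `L`, joining distinct points at distance at most `L`. Its graph
distance is the least number of steps of length at most `L` needed to join two points. -/
def ripsGraph (L : ℝ) : SimpleGraph X where
  Adj x y := x ≠ y ∧ dist x y ≤ L
  symm := ⟨fun _ _ h => ⟨h.1.symm, dist_comm (α := X) _ _ ▸ h.2⟩⟩
  loopless := ⟨fun _ h => h.1 rfl⟩

end Definitions

section GraphDistance

variable {V W : Type*} {Γ : SimpleGraph V} {Γ' : SimpleGraph W}

lemma exists_geodesic_of_reachable {x y : V} (h : Γ.Reachable x y) :
    ∃ c : ℕ → V, c 0 = x ∧ c (Γ.dist x y) = y ∧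
      ∀ i ≤ Γ.dist x y, ∀ j ≤ Γ.dist x y, Γ.dist (c i) (c j) = Nat.dist i j := by
  obtain ⟨p, hp⟩ := h.exists_walk_length_eq_dist
  have hle : ∀ i j, i ≤ j → Γ.dist (p.getVert i) (p.getVert j) ≤ j - i := fun i j hij =>
    calc Γ.dist (p.getVert i) (p.getVert j)
        = Γ.dist (p.getVert i) ((p.drop i).getVert (j - i)) := by
          rw [p.drop_getVert, Nat.add_sub_cancel' hij]
      _ ≤ ((p.drop i).take (j - i)).length := SimpleGraph.dist_le _
      _ ≤ j - i := by
          rw [SimpleGraph.Walk.take_length]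
          exact min_le_left _ _
  have hsub : ∀ i j, i ≤ j → j ≤ p.length → Γ.dist (p.getVert i) (p.getVert j) = j - i := by
    intro i j hij hj
    have hxi := hle 0 i i.zero_le
    have hij' := hle i j hij
    have hjy := hle j p.length hj
    rw [p.getVert_zero] at hxi
    rw [p.getVert_length] at hjy
    have hxy := (p.take i).reachable.dist_triangle_left y
    have hiy := (p.drop j).reachable.dist_triangle_right (p.getVert i)
    omega
  refine ⟨p.getVert, p.getVert_zero, hp ▸ p.getVert_length, fun i hi j hj => ?_⟩
  rcases le_total i j with hij | hij
  · rw [Nat.dist_eq_sub_of_le hij, hsub i j hij (hp ▸ hj)]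
  · rw [Nat.dist_eq_sub_of_le_right hij, SimpleGraph.dist_comm, hsub j i hij (hp ▸ hi)]

lemma exists_graphDist_eq_of_le {x y : V} (h : Γ.Reachable x y) {k : ℕ} (hk : k ≤ Γ.dist x y) :
    ∃ z, Γ.dist x z = k ∧ Γ.dist z y = Γ.dist x y - k := by
  obtain ⟨c, hx, hy, hc⟩ := exists_geodesic_of_reachable h
  refine ⟨c k, ?_, ?_⟩
  · simpa only [hx, Nat.dist_zero_left] using hc 0 (Nat.zero_le _) k hk
  · simpa only [hy, Nat.dist_eq_sub_of_le hk] using hc k hk _ le_rfl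

lemma graphEDist_map_le (f : Γ →g Γ') (x y : V) : Γ'.edist (f x) (f y) ≤ Γ.edist x y := by
  by_cases h : Γ.Reachable x y
  · obtain ⟨p, hp⟩ := h.exists_walk_length_eq_edist
    rw [← hp, ← p.length_map f]
    exact SimpleGraph.edist_le (p.map f)
  · exact SimpleGraph.edist_eq_top_of_not_reachable h ▸ le_top

lemma graphDist_map_eq (e : Γ ≃g Γ') (x y : V) : Γ'.dist (e x) (e y) = Γ.dist x y := by
  refine congrArg ENat.toNat ((graphEDist_map_le e.toHom x y).antisymm ?_)
  simpa using graphEDist_map_le e.symm.toHom (e x) (e y)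

lemma graphDist_add_le_of_gromovProduct_le (hconn : Γ.Preconnected) {C : ℝ} {w x y x' y' : V}
    (h : gromovProduct (fun x y => (Γ.dist x y : ℝ)) w x y ≤ C)
    (h' : gromovProduct (fun x y => (Γ.dist x y : ℝ)) w x' y' ≤ C) :
    (Γ.dist x y' : ℝ) + Γ.dist x' y ≤ Γ.dist x y + Γ.dist x' y' + 4 * C := by
  have hxy' : (Γ.dist x y' : ℝ) ≤ Γ.dist w x + Γ.dist w y' := by
    exact_mod_cast Γ.dist_comm (u := x) (v := w) ▸ (hconn x w).dist_triangle_left y'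
  have hx'y : (Γ.dist x' y : ℝ) ≤ Γ.dist w x' + Γ.dist w y := by
    exact_mod_cast Γ.dist_comm (u := x') (v := w) ▸ (hconn x' w).dist_triangle_left y
  unfold gromovProduct at h h'
  linarith

lemma dist_le_mul_graphDist [PseudoMetricSpace V] {L : ℝ}
    (hL : ∀ x y, Γ.Adj x y → dist x y ≤ L) {x y : V} (h : Γ.Reachable x y) :
    dist x y ≤ L * Γ.dist x y := by
  obtain ⟨p, hp⟩ := h.exists_walk_length_eq_dist
  calc dist x y = dist (p.getVert 0) (p.getVert p.length) := by
        rw [p.getVert_zero, p.getVert_length]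
    _ ≤ ∑ _j ∈ range p.length, L :=
        dist_le_range_sum_of_dist_le _ fun hj => hL _ _ (p.adj_getVert_succ hj)
    _ = L * Γ.dist x y := by rw [sum_const, card_range, nsmul_eq_mul, mul_comm, hp]

end GraphDistance

section RipsGraph

variable {X Y : Type*} [PseudoMetricSpace X] [PseudoMetricSpace Y] {δ L : ℝ}

lemma edist_ripsGraph_le_one {x y : X} (h : dist x y ≤ L) : (ripsGraph X L).edist x y ≤ 1 := by
  rw [SimpleGraph.edist_le_one_iff_adj_or_eq]
  exact (eq_or_ne x y).symm.imp (⟨·, h⟩) id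

lemma edist_ripsGraph_chain_le {c : ℕ → X} {n : ℕ} (hc : ∀ j < n, dist (c j) (c (j + 1)) ≤ L) :
    (ripsGraph X L).edist (c 0) (c n) ≤ n := by
  induction n with
  | zero => simp
  | succ n ih =>
    calc (ripsGraph X L).edist (c 0) (c (n + 1))
        ≤ (ripsGraph X L).edist (c 0) (c n) + (ripsGraph X L).edist (c n) (c (n + 1)) :=
          SimpleGraph.edist_triangle
      _ ≤ n + 1 := add_le_add (ih fun j hj => hc j (by omega))
          (edist_ripsGraph_le_one (hc n n.lt_succ_self))
      _ = (n + 1 : ℕ) := by push_cast; rfl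

lemma isLeast_chainLength_dist_ripsGraph {x y : X} (h : (ripsGraph X L).Reachable x y) :
    IsLeast {k : ℕ | ∃ c : ℕ → X, c 0 = x ∧ c k = y ∧ ∀ j < k, dist (c j) (c (j + 1)) ≤ L}
      ((ripsGraph X L).dist x y) := by
  constructor
  · obtain ⟨p, hp⟩ := h.exists_walk_length_eq_dist
    exact ⟨p.getVert, p.getVert_zero, hp ▸ p.getVert_length,
      fun j hj => (p.adj_getVert_succ (hp ▸ hj)).2⟩
  · rintro k ⟨c, rfl, rfl, hc⟩
    exact ENat.toNat_le_of_le_natCast (edist_ripsGraph_chain_le hc)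

lemma edist_ripsGraph_le_of_dist_lt (hδ : 0 ≤ δ) (hL : δ < L) (hgeo : IsWeaklyGeodesic X δ)
    {n : ℕ} {x y : X} (hxy : dist x y < n * (L - δ)) : (ripsGraph X L).edist x y ≤ n := by
  induction n generalizing x with
  | zero => exact absurd hxy (by simp [dist_nonneg])
  | succ n ih =>
    push_cast at hxy ⊢
    rcases le_total (dist x y) (L - δ) with hnear | hfar
    · exact (edist_ripsGraph_le_one (hnear.trans (sub_le_self L hδ))).trans le_add_self
    · obtain ⟨z, hxz, hzy⟩ := hgeo x y L (hδ.trans hL.le) (by linarith)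
      calc (ripsGraph X L).edist x y
          ≤ (ripsGraph X L).edist z y + (ripsGraph X L).edist x z := by
            rw [add_comm]; exact SimpleGraph.edist_triangle
        _ ≤ n + 1 := add_le_add (ih (by linarith)) (edist_ripsGraph_le_one hxz)

lemma edist_ripsGraph_le_floor (hδ : 0 ≤ δ) (hL : δ < L) (hgeo : IsWeaklyGeodesic X δ) (x y : X) :
    (ripsGraph X L).edist x y ≤ (⌊dist x y / (L - δ)⌋₊ + 1 : ℕ) :=
  edist_ripsGraph_le_of_dist_lt hδ hL hgeo <| by
    rw [← div_lt_iff₀ (sub_pos.2 hL)]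
    exact_mod_cast Nat.lt_floor_add_one _

lemma preconnected_ripsGraph (hδ : 0 ≤ δ) (hL : δ < L) (hgeo : IsWeaklyGeodesic X δ) :
    (ripsGraph X L).Preconnected := fun x y =>
  SimpleGraph.reachable_of_edist_ne_top <|
    ne_top_of_le_ne_top (ENat.natCast_ne_top _) (edist_ripsGraph_le_floor hδ hL hgeo x y)

lemma dist_ripsGraph_le (hδ : 0 ≤ δ) (hL : δ < L) (hgeo : IsWeaklyGeodesic X δ) (x y : X) :
    ((ripsGraph X L).dist x y : ℝ) ≤ dist x y / (L - δ) + 1 :=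
  calc ((ripsGraph X L).dist x y : ℝ) ≤ (⌊dist x y / (L - δ)⌋₊ + 1 : ℕ) :=
        Nat.cast_le.2 (ENat.toNat_le_of_le_natCast (edist_ripsGraph_le_floor hδ hL hgeo x y))
    _ ≤ dist x y / (L - δ) + 1 := by
        push_cast
        gcongr
        exact Nat.floor_le (div_nonneg dist_nonneg (sub_pos.2 hL).le)

lemma dist_ripsGraph_isometryEquiv (e : X ≃ᵢ Y) (x y : X) :
    (ripsGraph Y L).dist (e x) (e y) = (ripsGraph X L).dist x y :=
  graphDist_map_eq (Γ := ripsGraph X L)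
    ⟨e.toEquiv, by simp [ripsGraph, e.dist_eq]⟩ x y

end RipsGraph

lemma exists_card_le_of_dist_le_mul {X : Type*} [PseudoMetricSpace X] {d : X → X → ℝ} {L : ℝ}
    (hL : 0 ≤ L) (hd : ∀ x y, dist x y ≤ L * d x y)
    (hulf : ∀ r : ℝ, ∃ K : ℕ, ∀ x : X,
      (Metric.closedBall x r).Finite ∧ Nat.card (Metric.closedBall x r) ≤ K) (r : ℝ) :
    ∃ K : ℕ, ∀ x, {y | d x y ≤ r}.Finite ∧ Nat.card {y | d x y ≤ r} ≤ K := by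
  obtain ⟨K, hK⟩ := hulf (L * r)
  refine ⟨K, fun x => ?_⟩
  have hsub : {y | d x y ≤ r} ⊆ Metric.closedBall x (L * r) := fun y hy =>
    Metric.mem_closedBall'.2 ((hd x y).trans (mul_le_mul_of_nonneg_left hy hL))
  exact ⟨(hK x).1.subset hsub, (Nat.card_mono (hK x).1 hsub).trans (hK x).2⟩

section QuasiUltrametric

variable {X : Type*} {K : ℝ} {ρ : X → X → ℝ}

lemma IsQuasiUltrametric.le_two_mul_max (h : IsQuasiUltrametric K ρ) (hK : 1 ≤ K)
    (hK2 : K * K ≤ 2) (x₁ x₂ x₃ x₄ : X) :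
    ρ x₁ x₄ ≤ 2 * max (ρ x₁ x₂) (max (ρ x₂ x₃) (ρ x₃ x₄)) := by
  have : 0 ≤ K := zero_le_one.trans hK
  set m := max (ρ x₁ x₂) (max (ρ x₂ x₃) (ρ x₃ x₄))
  have hm : 0 ≤ m := (h.nonneg x₁ x₂).trans (le_max_left _ _)
  calc ρ x₁ x₄ ≤ K * max (ρ x₁ x₂) (ρ x₂ x₄) := h.le_mul_max _ _ _
    _ ≤ K * (K * m) := by
        gcongr
        refine max_le ((le_max_left _ _).trans (le_mul_of_one_le_left hm hK)) ?_
        exact (h.le_mul_max _ x₃ _).trans (by gcongr; exact le_max_right _ _)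
    _ ≤ 2 * m := by rw [← mul_assoc]; gcongr

lemma IsQuasiUltrametric.le_two_mul_sum_of_self_eq_zero (h : IsQuasiUltrametric K ρ)
    (hK : 1 ≤ K) (hK2 : K * K ≤ 2) (hself : ∀ x, ρ x x = 0) (c : ℕ → X) (n : ℕ) :
    ρ (c 0) (c n) ≤ 2 * ∑ j ∈ range n, ρ (c j) (c (j + 1)) := by
  let ρ' : X → X → NNReal := fun x y => ⟨ρ x y, h.nonneg x y⟩
  have hself' : ∀ x, ρ' x x = 0 := fun x => NNReal.eq (hself x)
  have hcomm' : ∀ x y, ρ' x y = ρ' y x := fun x y => NNReal.eq (h.comm x y)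
  have hfour : ∀ x₁ x₂ x₃ x₄,
      ρ' x₁ x₄ ≤ 2 * max (ρ' x₁ x₂) (max (ρ' x₂ x₃) (ρ' x₃ x₄)) := fun x₁ x₂ x₃ x₄ => by
    rw [← NNReal.coe_le_coe]
    push_cast
    exact h.le_two_mul_max hK hK2 x₁ x₂ x₃ x₄
  let := PseudoMetricSpace.ofPreNNDist ρ' hself' hcomm'
  calc ρ (c 0) (c n) ≤ 2 * dist (c 0) (c n) :=
        PseudoMetricSpace.le_two_mul_dist_ofPreNNDist ρ' hself' hcomm' hfour _ _
    _ ≤ 2 * ∑ j ∈ range n, dist (c j) (c (j + 1)) := by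
        gcongr
        exact dist_le_range_sum_dist c n
    _ ≤ 2 * ∑ j ∈ range n, ρ (c j) (c (j + 1)) := by
        gcongr
        exact PseudoMetricSpace.dist_ofPreNNDist_le ρ' hself' hcomm' _ _

open Classical in
lemma IsQuasiUltrametric.zero_diagonal (h : IsQuasiUltrametric K ρ) (hK : 1 ≤ K) :
    IsQuasiUltrametric K fun x y => if x = y then 0 else ρ x y where
  nonneg x y := by
    have := h.nonneg x y
    positivity
  comm x y := by simp only [eq_comm (a := x), h.comm x y]
  le_mul_max x y z := by
    have hxy := h.nonneg x y
    have hyz := h.nonneg y z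
    have hxz := le_mul_of_one_le_left (h.nonneg x z) hK
    by_cases x = z
    · rw [if_pos ‹_›]
      positivity
    by_cases x = y
    · subst y
      simp [*]
    by_cases y = z
    · subst y
      simp [*]
    simpa [*] using h.le_mul_max x y z

lemma IsQuasiUltrametric.le_two_mul_sum (h : IsQuasiUltrametric K ρ) (hK : 1 ≤ K)
    (hK2 : K * K ≤ 2) (c : ℕ → X) {n : ℕ} (hne : c 0 ≠ c n) :
    ρ (c 0) (c n) ≤ 2 * ∑ j ∈ range n, ρ (c j) (c (j + 1)) := by
  classical
  have hsum := (h.zero_diagonal hK).le_two_mul_sum_of_self_eq_zero hK hK2 (fun x => if_pos rfl) c n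
  rw [if_neg hne] at hsum
  refine hsum.trans ?_
  gcongr with j
  split_ifs
  · exact h.nonneg _ _
  · exact le_rfl

end QuasiUltrametric

section GromovProduct

variable {X : Type*} [PseudoMetricSpace X] {η ε : ℝ}

lemma gromovProduct_dist_comm (w x y : X) :
    gromovProduct dist w x y = gromovProduct dist w y x := by
  unfold gromovProduct
  rw [dist_comm x y, add_comm]

lemma gromovProduct_dist_self (w x : X) : gromovProduct dist w x x = dist w x := by
  simp [gromovProduct]

lemma dist_sub_dist_le_gromovProduct (w x y : X) :
    dist w x - dist x y ≤ gromovProduct dist w x y := by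
  unfold gromovProduct
  linarith [dist_triangle_right w x y]

lemma IsFourPointHyperbolic.min_gromovProduct_le
    (hhyp : IsFourPointHyperbolic (dist : X → X → ℝ) η) (w x y z : X) :
    min (gromovProduct dist w x y) (gromovProduct dist w y z) ≤
      gromovProduct dist w x z + η / 2 := by
  have h := hhyp x w y z
  unfold gromovProduct
  rw [dist_comm x w] at h
  rcases le_max_iff.1 (sub_le_iff_le_add.2 h) with h | h
  · exact (min_le_right _ _).trans (by linarith)
  · exact (min_le_left _ _).trans (by linarith)

lemma IsFourPointHyperbolic.isQuasiUltrametric_exp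
    (hhyp : IsFourPointHyperbolic (dist : X → X → ℝ) η) (hε : 0 ≤ ε) (w : X) :
    IsQuasiUltrametric (Real.exp (ε * (η / 2)))
      fun x y => Real.exp (-(ε * gromovProduct dist w x y)) where
  nonneg _ _ := Real.exp_nonneg _
  comm x y := by rw [gromovProduct_dist_comm]
  le_mul_max x y z := by
    rw [mul_max_of_nonneg _ _ (Real.exp_nonneg _), ← Real.exp_add, ← Real.exp_add, le_max_iff,
      Real.exp_le_exp, Real.exp_le_exp]
    refine (min_le_iff.1 (hhyp.min_gromovProduct_le w x y z)).imp (fun h => ?_) (fun h => ?_) <;>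
    linarith [mul_le_mul_of_nonneg_left h hε]

lemma IsFourPointHyperbolic.exp_neg_gromovProduct_le_two_mul_sum
    (hhyp : IsFourPointHyperbolic (dist : X → X → ℝ) η) (hη : 0 ≤ η) (hε : 0 ≤ ε)
    (hεη : Real.exp (ε * η) ≤ 2) (w : X) (c : ℕ → X) {n : ℕ} (hne : c 0 ≠ c n) :
    Real.exp (-(ε * gromovProduct dist w (c 0) (c n))) ≤
      2 * ∑ j ∈ range n, Real.exp (-(ε * gromovProduct dist w (c j) (c (j + 1)))) :=
  (hhyp.isQuasiUltrametric_exp hε w).le_two_mul_sum (Real.one_le_exp (by positivity))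
    (by rwa [← Real.exp_add, ← mul_add, add_halves]) c hne

lemma IsWeaklyGeodesic.exists_gromovProduct_le {δ : ℝ} (hgeo : IsWeaklyGeodesic X δ)
    (hδ : 0 ≤ δ) (hhyp : IsFourPointHyperbolic (dist : X → X → ℝ) η) {a b p q : X}
    (h₁ : dist a p + dist b q ≤ dist a b + dist p q + η)
    (h₂ : dist a q + dist p b ≤ dist a b + dist p q + η) :
    ∃ w : X, gromovProduct dist w a b ≤ δ / 2 ∧ gromovProduct dist w p q ≤ δ + 3 / 2 * η := by
  -- `w` is an approximate projection of `p` to the segment from `a` to `b`.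
  obtain ⟨w, haw, hwb⟩ := hgeo a b ((dist a p + dist a b - dist p b) / 2)
    (by linarith [dist_triangle_left p b a]) (by linarith [dist_triangle_right a p b])
  have hpw := hhyp a p w b
  have hqw := hhyp a q w b
  rw [dist_comm q b] at hqw
  simp only [gromovProduct]
  refine ⟨w, by rw [dist_comm w a]; linarith, ?_⟩
  rw [dist_comm w p, dist_comm w q]
  rcases le_max_iff.1 (sub_le_iff_le_add.2 hpw) with hpw | hpw <;>
  rcases le_max_iff.1 (sub_le_iff_le_add.2 hqw) with hqw | hqw <;> linarith

end GromovProduct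

section Quasigeodesic

lemma sum_range_pow_natDist_le {q : ℝ} (hq0 : 0 ≤ q) (hq1 : q < 1) (i n : ℕ) :
    ∑ j ∈ range n, q ^ Nat.dist i j ≤ 2 * (1 - q)⁻¹ := by
  have hgeom (m : ℕ) : ∑ k ∈ range m, q ^ k ≤ (1 - q)⁻¹ := by
    simpa using geom_sum_Ico_le_of_lt_one (m := 0) (n := m) hq0 hq1
  have hleft : ∑ j ∈ range i, q ^ Nat.dist i j ≤ ∑ k ∈ range i, q ^ k := by
    rw [← sum_range_reflect (fun k => q ^ k)]
    refine sum_le_sum fun j hj => pow_le_pow_of_le_one hq0 hq1.le ?_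
    rw [Nat.dist_eq_sub_of_le_right (mem_range.1 hj).le]
    omega
  calc ∑ j ∈ range n, q ^ Nat.dist i j ≤ ∑ j ∈ range (i + n), q ^ Nat.dist i j :=
        sum_le_sum_of_subset_of_nonneg (range_mono (Nat.le_add_left n i))
          fun _ _ _ => pow_nonneg hq0 _
    _ = ∑ j ∈ range i, q ^ Nat.dist i j + ∑ k ∈ range n, q ^ k := by
        rw [sum_range_add]
        simp only [Nat.dist_eq_sub_of_le (Nat.le_add_right i _), Nat.add_sub_cancel_left]
    _ ≤ 2 * (1 - q)⁻¹ := by linarith [hgeom i, hgeom n]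

lemma exists_pos_exp_mul_le_two {η : ℝ} (hη : 0 ≤ η) : ∃ ε > 0, Real.exp (ε * η) ≤ 2 := by
  have hη1 : 0 < η + 1 := by linarith
  refine ⟨Real.log 2 / (η + 1), div_pos (Real.log_pos one_lt_two) hη1, ?_⟩
  rw [← Real.le_log_iff_exp_le two_pos, div_mul_eq_mul_div, div_le_iff₀ hη1]
  exact mul_le_mul_of_nonneg_left (by linarith) (Real.log_nonneg one_le_two)

variable {X : Type*} [PseudoMetricSpace X] {η ε L a b : ℝ} {c : ℕ → X} {n i : ℕ} {w : X}

lemma IsQuasigeodesic.le_gromovProduct (hc : IsQuasigeodesic L a b c n) (ha : 0 < a) (hi : i ≤ n)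
    (hmin : ∀ k ≤ n, dist w (c i) ≤ dist w (c k)) {j : ℕ} (hj : j < n) :
    dist w (c i) / 2 - (L + b / (4 * a)) + Nat.dist i j / (4 * a) ≤
      gromovProduct dist w (c j) (c (j + 1)) := by
  have hdiv : Nat.dist i j / (4 * a) ≤ dist (c i) (c j) / 4 + b / (4 * a) := by
    rw [div_add_div _ _ four_ne_zero (by positivity),
      div_le_div_iff₀ (by positivity) (by positivity)]
    nlinarith [hc.natDist_le i hi j hj.le, mul_pos ha ha]
  have htri := dist_triangle_left (c i) (c j) w
  linarith [hmin j hj.le, hc.step_le j hj, dist_sub_dist_le_gromovProduct w (c j) (c (j + 1))]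

lemma IsQuasigeodesic.sum_exp_neg_gromovProduct_le (hc : IsQuasigeodesic L a b c n) (ha : 0 < a)
    (hε : 0 < ε) (hi : i ≤ n) (hmin : ∀ k ≤ n, dist w (c i) ≤ dist w (c k)) :
    ∑ j ∈ range n, Real.exp (-(ε * gromovProduct dist w (c j) (c (j + 1)))) ≤
      Real.exp (-(ε * (dist w (c i) / 2 - (L + b / (4 * a))))) *
        (2 * (1 - Real.exp (-(ε / (4 * a))))⁻¹) := by
  set M := dist w (c i) / 2 - (L + b / (4 * a))
  set q := Real.exp (-(ε / (4 * a))) with hq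
  have hq1 : q < 1 := Real.exp_lt_one_iff.2 (neg_lt_zero.2 (by positivity))
  have hterm : ∀ j ∈ range n, Real.exp (-(ε * gromovProduct dist w (c j) (c (j + 1)))) ≤
      Real.exp (-(ε * M)) * q ^ Nat.dist i j := fun j hj => by
    rw [hq, ← Real.exp_nat_mul, ← Real.exp_add, Real.exp_le_exp]
    calc -(ε * gromovProduct dist w (c j) (c (j + 1)))
        ≤ -(ε * (M + Nat.dist i j / (4 * a))) := by
          gcongr
          exact hc.le_gromovProduct ha hi hmin (mem_range.1 hj)
      _ = -(ε * M) + Nat.dist i j * -(ε / (4 * a)) := by ring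
  calc _ ≤ ∑ j ∈ range n, Real.exp (-(ε * M)) * q ^ Nat.dist i j := sum_le_sum hterm
    _ = Real.exp (-(ε * M)) * ∑ j ∈ range n, q ^ Nat.dist i j := (mul_sum _ _ _).symm
    _ ≤ _ := by
        gcongr
        exact sum_range_pow_natDist_le (Real.exp_nonneg _) hq1 i n

lemma IsFourPointHyperbolic.exists_dist_quasigeodesic_le
    (hhyp : IsFourPointHyperbolic (dist : X → X → ℝ) η) (hη : 0 ≤ η) (ha : 0 < a) (L b R : ℝ) :
    ∃ D : ℝ, ∀ (w : X) (c : ℕ → X) (n : ℕ), IsQuasigeodesic L a b c n →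
      gromovProduct dist w (c 0) (c n) ≤ R → ∃ i ≤ n, dist w (c i) ≤ D := by
  obtain ⟨ε, hε, hεη⟩ := exists_pos_exp_mul_le_two hη
  set S := 2 * (2 * (1 - Real.exp (-(ε / (4 * a))))⁻¹) with hS
  have hS0 : 0 < S := by
    have : 0 < 1 - Real.exp (-(ε / (4 * a))) :=
      sub_pos.2 (Real.exp_lt_one_iff.2 (neg_lt_zero.2 (by positivity)))
    positivity
  refine ⟨max R (2 * (R + Real.log S / ε + (L + b / (4 * a)))), fun w c n hc hR => ?_⟩
  rcases eq_or_ne (c 0) (c n) with heq | hne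
  · rw [← heq, gromovProduct_dist_self] at hR
    exact ⟨0, n.zero_le, le_max_of_le_left hR⟩
  obtain ⟨i, hi, hmin⟩ := exists_min_image (range (n + 1)) (fun j => dist w (c j)) ⟨0, by simp⟩
  simp only [mem_range, Nat.lt_succ_iff] at hi hmin
  refine ⟨i, hi, le_max_of_le_right ?_⟩
  set M := dist w (c i) / 2 - (L + b / (4 * a)) with hM
  have hexp : Real.exp (-(ε * R)) ≤ Real.exp (-(ε * M) + Real.log S) :=
    calc Real.exp (-(ε * R)) ≤ Real.exp (-(ε * gromovProduct dist w (c 0) (c n))) := by gcongr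
      _ ≤ 2 * ∑ j ∈ range n, Real.exp (-(ε * gromovProduct dist w (c j) (c (j + 1)))) :=
          hhyp.exp_neg_gromovProduct_le_two_mul_sum hη hε.le hεη w c hne
      _ ≤ 2 * (Real.exp (-(ε * M)) * (2 * (1 - Real.exp (-(ε / (4 * a))))⁻¹)) := by
          gcongr
          exact hc.sum_exp_neg_gromovProduct_le ha hε hi hmin
      _ = Real.exp (-(ε * M) + Real.log S) := by
          rw [Real.exp_add, Real.exp_log hS0, hS]; ring
  have hMR : M ≤ R + Real.log S / ε := by
    rw [← sub_le_iff_le_add', le_div_iff₀ hε]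
    linarith [Real.exp_le_exp.1 hexp]
  linarith

end Quasigeodesic

section HyperbolicGraph

variable {X : Type*} [PseudoMetricSpace X] {Γ : SimpleGraph X} {δ η L a b : ℝ}

lemma isQuasigeodesic_of_graphDist_eq (hΓL : ∀ x y, Γ.Adj x y → dist x y ≤ L)
    (hΓ : ∀ x y, (Γ.dist x y : ℝ) ≤ a * dist x y + b) {c : ℕ → X} {n : ℕ}
    (hc : ∀ i ≤ n, ∀ j ≤ n, Γ.dist (c i) (c j) = Nat.dist i j) : IsQuasigeodesic L a b c n where
  step_le j hj := hΓL _ _ <| SimpleGraph.dist_eq_one_iff_adj.1 <| by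
    rw [hc j hj.le (j + 1) hj, Nat.dist_eq_sub_of_le j.le_succ]
    exact Nat.add_sub_cancel_left j 1
  natDist_le i hi j hj := hc i hi j hj ▸ hΓ _ _

lemma IsFourPointHyperbolic.exists_gromovProduct_graphDist_le
    (hhyp : IsFourPointHyperbolic (dist : X → X → ℝ) η) (hη : 0 ≤ η) (hconn : Γ.Preconnected)
    (hΓL : ∀ x y, Γ.Adj x y → dist x y ≤ L) (ha : 0 < a)
    (hΓ : ∀ x y, (Γ.dist x y : ℝ) ≤ a * dist x y + b) (R : ℝ) :
    ∃ C : ℝ, ∀ w x y, gromovProduct dist w x y ≤ R →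
      gromovProduct (fun x y => (Γ.dist x y : ℝ)) w x y ≤ C := by
  obtain ⟨D, hD⟩ := hhyp.exists_dist_quasigeodesic_le hη ha L b R
  refine ⟨a * D + b, fun w x y hR => ?_⟩
  obtain ⟨c, hx, hy, hc⟩ := exists_geodesic_of_reachable (hconn x y)
  obtain ⟨j, hj, hwj⟩ := hD w c _ (isQuasigeodesic_of_graphDist_eq hΓL hΓ hc) (by rwa [hx, hy])
  obtain ⟨hxj, hjy⟩ : Γ.dist x (c j) = j ∧ Γ.dist (c j) y = Γ.dist x y - j := by
    constructor
    · simpa only [hx, Nat.dist_zero_left] using hc 0 (Nat.zero_le _) j hj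
    · simpa only [hy, Nat.dist_eq_sub_of_le hj] using hc j hj _ le_rfl
  have hwx := (hconn w (c j)).dist_triangle_left x
  have hwy := (hconn w (c j)).dist_triangle_left y
  rw [Γ.dist_comm (u := c j) (v := x)] at hwx
  have hsum : (Γ.dist w x + Γ.dist w y : ℝ) ≤ Γ.dist x y + 2 * Γ.dist w (c j) := by
    exact_mod_cast (by omega : Γ.dist w x + Γ.dist w y ≤ Γ.dist x y + 2 * Γ.dist w (c j))
  have hwc : (Γ.dist w (c j) : ℝ) ≤ a * D + b := (hΓ w (c j)).trans (by gcongr)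
  unfold gromovProduct
  linarith

lemma IsFourPointHyperbolic.exists_graphDist
    (hhyp : IsFourPointHyperbolic (dist : X → X → ℝ) η) (hη : 0 ≤ η) (hδ : 0 ≤ δ)
    (hgeo : IsWeaklyGeodesic X δ) (hconn : Γ.Preconnected)
    (hΓL : ∀ x y, Γ.Adj x y → dist x y ≤ L) (ha : 0 < a)
    (hΓ : ∀ x y, (Γ.dist x y : ℝ) ≤ a * dist x y + b) :
    ∃ η' : ℝ, 0 ≤ η' ∧ IsFourPointHyperbolic (fun x y => (Γ.dist x y : ℝ)) η' := by
  obtain ⟨C, hC⟩ :=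
    hhyp.exists_gromovProduct_graphDist_le hη hconn hΓL ha hΓ (δ + 3 / 2 * η)
  have hcross : ∀ x y x' y' : X, dist x x' + dist y y' ≤ dist x y + dist x' y' →
      dist x y' + dist x' y ≤ dist x y + dist x' y' + η →
      (Γ.dist x y' : ℝ) + Γ.dist x' y ≤ Γ.dist x y + Γ.dist x' y' + max 0 (4 * C) := by
    intro x y x' y' h₁ h₂
    obtain ⟨w, hxy, hxy'⟩ :=
      hgeo.exists_gromovProduct_le hδ hhyp (h₁.trans (le_add_of_nonneg_right hη)) h₂
    refine (graphDist_add_le_of_gromovProduct_le hconn (hC w x y (by linarith))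
      (hC w x' y' hxy')).trans ?_
    gcongr
    exact le_max_right _ _
  refine ⟨max 0 (4 * C), le_max_left _ _, fun x₁ x₂ x₃ x₄ => ?_⟩
  have h := hhyp x₁ x₂ x₃ x₄
  rcases le_total (dist x₁ x₂ + dist x₃ x₄) (dist x₁ x₃ + dist x₂ x₄) with hle | hle
  · rw [max_eq_right hle] at h
    exact (hcross x₁ x₃ x₂ x₄ hle h).trans (by gcongr; exact le_max_right _ _)
  · rw [max_eq_left hle, dist_comm x₂ x₃] at h
    beta_reduce
    rw [Γ.dist_comm (u := x₂)]
    exact (hcross x₁ x₂ x₃ x₄ hle h).trans (by gcongr; exact le_max_left _ _)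

end HyperbolicGraph

theorem chain_metric_good_discrete_hyperbolic_general
    {X : Type*} [PseudoMetricSpace X] {G : Type*} [Group G] [MulAction G X] [IsIsometricSMul G X]
    {δ η L : ℝ} (hδ : 0 ≤ δ) (hη : 0 ≤ η) (hL : δ < L)
    (hhyp : IsFourPointHyperbolic (dist : X → X → ℝ) η) (hgeo : IsWeaklyGeodesic X δ)
    (hulf : ∀ r : ℝ, ∃ K : ℕ, ∀ x : X,
      (Metric.closedBall x r).Finite ∧ Nat.card (Metric.closedBall x r) ≤ K) :
    ∃ d' : X → X → ℕ,
      (∀ x y : X, IsLeast {k : ℕ | ∃ c : ℕ → X, c 0 = x ∧ c k = y ∧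
        ∀ j < k, dist (c j) (c (j + 1)) ≤ L} (d' x y)) ∧
      (∀ x y : X, d' x y = 0 ↔ x = y) ∧
      (∀ x y : X, d' x y = d' y x) ∧
      (∀ x y z : X, d' x z ≤ d' x y + d' y z) ∧
      (∀ x y : X, dist x y ≤ L * (d' x y : ℝ)) ∧
      (∀ x y : X, (d' x y : ℝ) ≤ dist x y / (L - δ) + 1) ∧
      (∀ x y : X, ∀ k : ℕ, k ≤ d' x y → ∃ z : X, d' x z = k ∧ d' z y = d' x y - k) ∧
      (∀ r : ℝ, ∃ K : ℕ, ∀ x : X, {y : X | (d' x y : ℝ) ≤ r}.Finite ∧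
        Nat.card {y : X | (d' x y : ℝ) ≤ r} ≤ K) ∧
      (∃ η' : ℝ, 0 ≤ η' ∧ IsFourPointHyperbolic (fun x y => (d' x y : ℝ)) η') ∧
      (∀ (g : G) (x y : X), d' (g • x) (g • y) = d' x y) := by
  have hconn := preconnected_ripsGraph hδ hL hgeo
  have hadj : ∀ x y, (ripsGraph X L).Adj x y → dist x y ≤ L := fun _ _ h => h.2
  have hlower : ∀ x y, dist x y ≤ L * (ripsGraph X L).dist x y :=
    fun x y => dist_le_mul_graphDist hadj (hconn x y)
  have hupper := dist_ripsGraph_le hδ hL hgeo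
  refine ⟨(ripsGraph X L).dist, fun x y => isLeast_chainLength_dist_ripsGraph (hconn x y),
    fun x y => (hconn x y).dist_eq_zero_iff, fun _ _ => SimpleGraph.dist_comm,
    fun x y z => (hconn x y).dist_triangle_left z, hlower, hupper,
    fun x y _ => exists_graphDist_eq_of_le (hconn x y),
    exists_card_le_of_dist_le_mul (hδ.trans hL.le) hlower hulf, ?_,
    fun g => dist_ripsGraph_isometryEquiv (IsometryEquiv.constSMul g)⟩
  exact hhyp.exists_graphDist hη hδ hgeo hconn hadj (inv_pos.2 (sub_pos.2 hL))
    fun x y => (hupper x y).trans_eq (by rw [div_eq_inv_mul])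

/-- Proposition 5.1 of Alvarez–Lafforgue. Let `(X, d)` be δ-hyperbolic, weakly
δ-geodesic and uniformly locally finite, with an isometric action of a group `G`.
Define `d' x y` as the least `k ∈ ℕ` admitting a chain `x = x₀, …, x_k = y` with
`d(x_j, x_{j+1}) ≤ δ + 1`. Then `d'` is a well-defined metric, quasi-isometric to `d`
(`d ≤ (δ+1)·d'` and `d' ≤ d + 1`), `ℕ`-valued, geodesic in the discrete sense,
uniformly locally finite, δ'-hyperbolic for some `δ' ≥ 0`, and `G` acts on `(X, d')`
by isometries: `(X, d')` is a good discrete hyperbolic space. -/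
theorem chain_metric_good_discrete_hyperbolic
    {X : Type*} [MetricSpace X] {G : Type*} [Group G] [MulAction G X]
    (δ : ℝ) (hδ : 0 ≤ δ)
    (hhyp : ∀ x₁ x₂ x₃ x₄ : X, dist x₁ x₄ + dist x₂ x₃ ≤
      max (dist x₁ x₂ + dist x₃ x₄) (dist x₁ x₃ + dist x₂ x₄) + δ)
    (hwgeo : ∀ x y : X, ∀ s : ℝ, 0 ≤ s → s ≤ dist x y + δ →
      ∃ z : X, dist x z ≤ s ∧ dist z y ≤ dist x y - s + δ)
    (hulf : ∀ r : ℝ, ∃ K : ℕ, ∀ x : X,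
      (Metric.closedBall x r).Finite ∧ Nat.card (Metric.closedBall x r) ≤ K)
    (hiso : ∀ (g : G) (x y : X), dist (g • x) (g • y) = dist x y) :
    ∃ d' : X → X → ℕ,
      -- `d' x y` is the least length of a chain from `x` to `y` with steps `≤ δ + 1`
      (∀ x y : X, IsLeast {k : ℕ | ∃ c : ℕ → X, c 0 = x ∧ c k = y ∧
        ∀ j < k, dist (c j) (c (j + 1)) ≤ δ + 1} (d' x y)) ∧
      -- `d'` is a metric
      (∀ x y : X, d' x y = 0 ↔ x = y) ∧
      (∀ x y : X, d' x y = d' y x) ∧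
      (∀ x y z : X, d' x z ≤ d' x y + d' y z) ∧
      -- quasi-isometry: `d ≤ (δ+1)·d'` and `d' ≤ d + 1`
      (∀ x y : X, dist x y ≤ (δ + 1) * (d' x y : ℝ)) ∧
      (∀ x y : X, (d' x y : ℝ) ≤ dist x y + 1) ∧
      -- `d'` is geodesic in the discrete sense
      (∀ x y : X, ∀ k : ℕ, k ≤ d' x y →
        ∃ z : X, d' x z = k ∧ d' z y = d' x y - k) ∧
      -- `(X, d')` is uniformly locally finite
      (∀ r : ℝ, ∃ K : ℕ, ∀ x : X, {y : X | (d' x y : ℝ) ≤ r}.Finite ∧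
        Nat.card {y : X | (d' x y : ℝ) ≤ r} ≤ K) ∧
      -- `(X, d')` is δ'-hyperbolic for some `δ' ≥ 0`
      (∃ δ' : ℝ, 0 ≤ δ' ∧ ∀ x₁ x₂ x₃ x₄ : X, (d' x₁ x₄ : ℝ) + (d' x₂ x₃ : ℝ) ≤
        max ((d' x₁ x₂ : ℝ) + (d' x₃ x₄ : ℝ)) ((d' x₁ x₃ : ℝ) + (d' x₂ x₄ : ℝ)) + δ') ∧
      -- `G` acts on `(X, d')` by isometries
      (∀ (g : G) (x y : X), d' (g • x) (g • y) = d' x y) := by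
  have : IsIsometricSMul G X := ⟨fun g => Isometry.of_dist_eq (hiso g)⟩
  simpa only [IsFourPointHyperbolic, add_sub_cancel_left, div_one] using
    chain_metric_good_discrete_hyperbolic_general (G := G) hδ hδ (lt_add_one δ) hhyp hwgeo hulf
end

section
/- Let T be a tree with vertex set V and graph metric d, and let o, o' ∈ V with o ≠ o'. Then the set of pairs (a,b) ∈ V × V such that exactly one of the two conditions 'b is the o-directed neighbor of a' and 'b is the o'-directed neighbor of a' holds is finite, of cardinality 2·(d(o,o') + 1). Consequently, for every real p ≥ 1, the function c on V × V given by c(a,b) = 1_{b is the o-directed neighbor of a} − 1_{b is the o'-directed neighbor of a} satisfies ∑_{(a,b)} |c(a,b)|^p = 2·(d(o,o') + 1). -/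
/-- `b` is the `x`-directed neighbor of `a` in the graph `T`: either `a = x` and
`b = a`, or `b` is adjacent to `a` and one step closer to `x`. -/
def SimpleGraph.DirNbr {V : Type*} (T : SimpleGraph V) (x a b : V) : Prop :=
  (a = x ∧ b = a) ∨ (T.Adj a b ∧ T.dist x b + 1 = T.dist x a)

open Classical in
/-- The difference of the indicator functions of the `o`-directed and `o'`-directed
neighbor relations, as a function on pairs of vertices (this is the cocycle value
`c(a, b) = μ_o(a)({b}) - μ_{o'}(a)({b})` of Section 2 of Alvarez–Lafforgue). -/
noncomputable def dirDiff {V : Type*} (T : SimpleGraph V) (o o' : V) (q : V × V) : ℝ :=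
  (if T.DirNbr o q.1 q.2 then 1 else 0) - (if T.DirNbr o' q.1 q.2 then 1 else 0)

/-!
The `x`-directed neighbor of `a ≠ x` is the second vertex of the path from `a` to `x`. If `a` is off
the path `w` from `o` to `o'`, then following the path from `a` to `o` by `w` never returns to `a`,
so deleting the detours of this walk gives the path from `a` to `o'` without changing its first
step: the two directed neighbors of `a` agree. If `a` is on `w`, a common directed neighbor would be
closer to both `o` and `o'`, against the triangle inequality. Hence the two directed-neighbor
functions differ exactly at the `d(o, o') + 1` vertices of `w`, and each such vertex contributes one
pair from either function.
-/

namespace DirectedNeighbor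

open SimpleGraph

section Counting

variable {α β V : Type*}

lemma encard_graphOn (s : Set α) (f : α → β) : (s.graphOn f).encard = s.encard := by
  rw [← Set.fst_injOn_graph.encard_image, Set.image_fst_graphOn]

lemma encard_setOf_xor_eq_snd (f g : α → β) :
    {q : α × β | Xor (f q.1 = q.2) (g q.1 = q.2)}.encard = 2 * {a | f a ≠ g a}.encard := by
  set s := {a | f a ≠ g a} with hs
  have hunion : {q : α × β | Xor (f q.1 = q.2) (g q.1 = q.2)} = s.graphOn f ∪ s.graphOn g := by
    ext ⟨a, b⟩
    simp only [hs, Xor, Set.mem_ofPred_eq, Set.mem_union, Set.mem_graphOn]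
    grind
  have hdisj : Disjoint (s.graphOn f) (s.graphOn g) := by
    refine Set.disjoint_left.mpr fun q hf hg => ?_
    rw [Set.mem_graphOn] at hf hg
    exact hf.1 (hf.2.trans hg.2.symm)
  rw [hunion, Set.encard_union_eq hdisj, encard_graphOn, encard_graphOn, two_mul]

lemma encard_setOf_mem_support {G : SimpleGraph V} {x y : V} {w : G.Walk x y} (hw : w.IsPath) :
    {a | a ∈ w.support}.encard = w.length + 1 := by
  classical
  rw [← List.coe_toFinset, Set.encard_coe_eq_coe_finsetCard,
    List.toFinset_card_of_nodup hw.support_nodup, Walk.length_support, Nat.cast_succ]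

end Counting

variable {V : Type*} {T : SimpleGraph V} {o o' x y a b : V}

lemma dist_add_dist_le_length {w : T.Walk x y} (ha : a ∈ w.support) :
    T.dist x a + T.dist a y ≤ w.length := by
  classical
  rw [← w.take_spec ha, Walk.length_append]
  exact Nat.add_le_add (dist_le _) (dist_le _)

lemma length_eq_dist_of_isPath (hT : T.IsAcyclic) {p : T.Walk x y} (hp : p.IsPath) :
    p.length = T.dist x y := by
  obtain ⟨q, hq, hlen⟩ := p.reachable.exists_path_of_dist
  have hpq := (hT.subsingleton_path x y).elim ⟨p, hp⟩ ⟨q, hq⟩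
  rw [Subtype.mk.inj hpq, hlen]

lemma exists_isPath_cons_of_dirNbr (hax : a ≠ x) (hb : T.DirNbr x a b) :
    ∃ (h : T.Adj a b) (p : T.Walk b x), (Walk.cons h p).IsPath := by
  obtain ⟨rfl, -⟩ | ⟨hab, hdist⟩ := hb
  · exact absurd rfl hax
  have hxa : T.Reachable x a := .of_dist_ne_zero (by lia)
  obtain ⟨p, hp⟩ := (hxa.trans hab.reachable).symm.exists_walk_length_eq_dist
  refine ⟨hab, p, Walk.isPath_of_length_eq_dist _ ?_⟩
  rw [Walk.length_cons, hp, dist_comm, hdist, dist_comm]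

lemma dirNbr_of_isPath_cons (hT : T.IsAcyclic) {h : T.Adj a b} {p : T.Walk b x}
    (hp : (Walk.cons h p).IsPath) : T.DirNbr x a b := by
  refine .inr ⟨h, ?_⟩
  rw [dist_comm, ← length_eq_dist_of_isPath hT hp.of_cons, dist_comm,
    ← length_eq_dist_of_isPath hT hp, Walk.length_cons]

lemma dirNbr_unique (hT : T.IsAcyclic) {b' : V} (hb : T.DirNbr x a b) (hb' : T.DirNbr x a b') :
    b = b' := by
  by_cases hax : a = x
  · simp_all [DirNbr]
  obtain ⟨h, p, hp⟩ := exists_isPath_cons_of_dirNbr hax hb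
  obtain ⟨h', p', hp'⟩ := exists_isPath_cons_of_dirNbr hax hb'
  have heq := (hT.subsingleton_path a x).elim ⟨_, hp⟩ ⟨_, hp'⟩
  simpa using congrArg Walk.snd (Subtype.ext_iff.mp heq)

lemma existsUnique_dirNbr (hT : T.IsTree) (x a : V) : ∃! b, T.DirNbr x a b := by
  refine existsUnique_of_exists_of_unique ?_ fun _ _ => dirNbr_unique hT.isAcyclic
  obtain ⟨p, hp, -⟩ := hT.connected.exists_path_of_dist a x
  cases p with
  | nil => exact ⟨x, .inl ⟨rfl, rfl⟩⟩
  | cons h p => exact ⟨_, dirNbr_of_isPath_cons hT.isAcyclic hp⟩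

lemma dirNbr_of_notMem_support (hT : T.IsAcyclic) {w : T.Walk x y} (ha : a ∉ w.support)
    (hb : T.DirNbr x a b) : T.DirNbr y a b := by
  classical
  have hax : a ≠ x := fun hax => ha (hax ▸ w.start_mem_support)
  obtain ⟨h, p, hp⟩ := exists_isPath_cons_of_dirNbr hax hb
  rw [Walk.cons_isPath_iff] at hp
  have ha' : a ∉ (p.append w).support := by
    rw [Walk.mem_support_append_iff]
    exact not_or_intro hp.2 ha
  have hpath : (Walk.cons h (p.append w).bypass).IsPath :=
    (Walk.bypass_isPath _).cons fun hmem => ha' ((p.append w).support_bypass_subset_support hmem)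
  exact dirNbr_of_isPath_cons hT hpath

lemma eq_of_dirNbr_of_dirNbr (hbtw : T.dist x a + T.dist a y ≤ T.dist x y)
    (hx : T.DirNbr x a b) (hy : T.DirNbr y a b) : x = y := by
  obtain ⟨rfl, rfl⟩ | ⟨hab, hxb⟩ := hx <;> obtain ⟨rfl, hba⟩ | ⟨hab', hyb⟩ := hy
  · rfl
  · exact absurd hab' T.irrefl
  · exact absurd hba hab.ne'
  · have hxa : T.Reachable x a := .of_dist_ne_zero (by lia)
    have htri : T.dist x y ≤ T.dist x b + T.dist b y :=
      (hxa.trans hab.reachable).dist_triangle_left y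
    rw [T.dist_comm (u := y), T.dist_comm (u := y)] at hyb
    lia

/-- The `x`-directed neighbor of `a` in a tree, as a function of `x` and `a`; it makes the relation
`SimpleGraph.DirNbr` the graph of a function for each base point `x`. -/
noncomputable def directedNeighbor (hT : T.IsTree) (x a : V) : V :=
  (existsUnique_dirNbr hT x a).choose

lemma dirNbr_directedNeighbor (hT : T.IsTree) (x a : V) :
    T.DirNbr x a (directedNeighbor hT x a) :=
  (existsUnique_dirNbr hT x a).choose_spec.1

lemma dirNbr_iff_directedNeighbor_eq (hT : T.IsTree) :
    T.DirNbr x a b ↔ directedNeighbor hT x a = b :=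
  ⟨dirNbr_unique hT.isAcyclic (dirNbr_directedNeighbor hT x a),
    fun h => h ▸ dirNbr_directedNeighbor hT x a⟩

lemma directedNeighbor_ne_iff_mem_support (hT : T.IsTree) (hxy : x ≠ y) {w : T.Walk x y}
    (hw : w.IsPath) : directedNeighbor hT x a ≠ directedNeighbor hT y a ↔ a ∈ w.support := by
  constructor
  · contrapose!
    intro ha
    have hy := dirNbr_of_notMem_support hT.isAcyclic ha (dirNbr_directedNeighbor hT x a)
    exact ((dirNbr_iff_directedNeighbor_eq hT).mp hy).symm
  · intro ha heq
    have hdist := dist_add_dist_le_length ha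
    rw [length_eq_dist_of_isPath hT.isAcyclic hw] at hdist
    exact hxy (eq_of_dirNbr_of_dirNbr hdist (dirNbr_directedNeighbor hT x a)
      (heq ▸ dirNbr_directedNeighbor hT y a))

lemma encard_setOf_directedNeighbor_ne (hT : T.IsTree) (hxy : x ≠ y) :
    {a | directedNeighbor hT x a ≠ directedNeighbor hT y a}.encard = T.dist x y + 1 := by
  obtain ⟨w, hw, hlen⟩ := hT.connected.exists_path_of_dist x y
  simp_rw [directedNeighbor_ne_iff_mem_support hT hxy hw]
  rw [encard_setOf_mem_support hw, hlen]

theorem encard_setOf_xor_dirNbr (hT : T.IsTree) (ho : o ≠ o') :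
    {q : V × V | Xor (T.DirNbr o q.1 q.2) (T.DirNbr o' q.1 q.2)}.encard =
      2 * (T.dist o o' + 1) := by
  simp_rw [dirNbr_iff_directedNeighbor_eq hT]
  rw [encard_setOf_xor_eq_snd, encard_setOf_directedNeighbor_ne hT ho]

lemma abs_dirDiff_rpow (T : SimpleGraph V) (o o' : V) {p : ℝ} (hp : 0 < p) (q : V × V) :
    |dirDiff T o o' q| ^ p =
      {q : V × V | Xor (T.DirNbr o q.1 q.2) (T.DirNbr o' q.1 q.2)}.indicator 1 q := by
  by_cases h : T.DirNbr o q.1 q.2 <;> by_cases h' : T.DirNbr o' q.1 q.2 <;>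
    simp [dirDiff, Xor, Set.indicator, h, h', Real.zero_rpow hp.ne']

lemma finsum_abs_dirDiff_rpow
    (hfin : {q : V × V | Xor (T.DirNbr o q.1 q.2) (T.DirNbr o' q.1 q.2)}.Finite)
    {p : ℝ} (hp : 0 < p) :
    ∑ᶠ q : V × V, |dirDiff T o o' q| ^ p =
      {q : V × V | Xor (T.DirNbr o q.1 q.2) (T.DirNbr o' q.1 q.2)}.ncard := by
  rw [← finsum_one, Nat.cast_finsum_mem hfin, Nat.cast_one]
  simp_rw [finsum_mem_def, abs_dirDiff_rpow T o o' hp, Pi.one_def]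

end DirectedNeighbor

open DirectedNeighbor in
theorem dirDiff_lp_norm_general
    {V : Type*} (T : SimpleGraph V) (hT : T.IsTree) (o o' : V) (ho : o ≠ o') :
    {q : V × V | Xor (T.DirNbr o q.1 q.2) (T.DirNbr o' q.1 q.2)}.Finite ∧
    Nat.card {q : V × V | Xor (T.DirNbr o q.1 q.2) (T.DirNbr o' q.1 q.2)} =
      2 * (T.dist o o' + 1) ∧
    ∀ p : ℝ, 0 < p →
      ∑ᶠ q : V × V, |dirDiff T o o' q| ^ p = 2 * ((T.dist o o' : ℝ) + 1) := by
  set S := {q : V × V | Xor (T.DirNbr o q.1 q.2) (T.DirNbr o' q.1 q.2)}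
  have hencard : S.encard = (2 * (T.dist o o' + 1) : ℕ) :=
    mod_cast encard_setOf_xor_dirNbr hT ho
  have hncard : S.ncard = 2 * (T.dist o o' + 1) := by
    rw [Set.ncard_def, hencard, ENat.toNat_natCast]
  have hfinite : S.Finite := Set.finite_of_encard_eq_coe hencard
  refine ⟨hfinite, hncard, fun p hp => ?_⟩
  rw [finsum_abs_dirDiff_rpow hfinite hp, hncard]
  norm_cast

/-- Section 2 of Alvarez–Lafforgue: on a tree, for `o ≠ o'`, the set of pairs `(a, b)`
on which the `o`-directed and `o'`-directed neighbor relations disagree is finite of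
cardinality `2 (d(o, o') + 1)`; consequently, for every `p ≥ 1`,
`∑ |c(a,b)|^p = 2 (d(o, o') + 1)`. -/
theorem dirDiff_lp_norm
    {V : Type*} (T : SimpleGraph V) (hT : T.IsTree) (o o' : V) (ho : o ≠ o') :
    {q : V × V | Xor' (T.DirNbr o q.1 q.2) (T.DirNbr o' q.1 q.2)}.Finite ∧
    Nat.card {q : V × V | Xor' (T.DirNbr o q.1 q.2) (T.DirNbr o' q.1 q.2)} =
      2 * (T.dist o o' + 1) ∧
    ∀ p : ℝ, 1 ≤ p →
      ∑ᶠ q : V × V, |dirDiff T o o' q| ^ p = 2 * ((T.dist o o' : ℝ) + 1) := by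
  obtain ⟨hfinite, hcard, hsum⟩ := dirDiff_lp_norm_general T hT o o' ho
  exact ⟨hfinite, hcard, fun p hp => hsum p (zero_lt_one.trans_le hp)⟩
end
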